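/- Let 𝔽 denote the Fano plane. There exist constants N_0 and c > 0 such that for all integers n ≥ N_0 and all integers t with 0 ≤ t ≤ c·n, one has EX(n,(t+1)𝔽) = { K_t^3 ⋈ B_3(n−t) }. -/

import Mathlib

open Filter

namespace DensityCH

/-- An `r`-uniform hypergraph with vertices in `ℕ`:
a finite vertex set together with a set of `r`-element edges. -/
structure HGraph (r : ℕ) where
  verts : Finset ℕ
  edges : Finset (Finset ℕ)
  edges_sub : ∀ e ∈ edges, e ⊆ verts
  edges_card : ∀ e ∈ edges, e.card = r

namespace HGraph

/-- Build an `r`-graph from a vertex set and a set of candidate edges,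
keeping exactly the well-formed candidates. -/
def ofEdges (r : ℕ) (V : Finset ℕ) (E : Finset (Finset ℕ)) : HGraph r where
  verts := V
  edges := E.filter fun e => e ⊆ V ∧ e.card = r
  edges_sub := fun e he => ((Finset.mem_filter.mp he).2).1
  edges_card := fun e he => ((Finset.mem_filter.mp he).2).2

variable {r : ℕ}

/-- `H` contains a copy of `F`, i.e. a subgraph isomorphic to `F`. -/
def IsCopyIn (F H : HGraph r) : Prop :=
  ∃ f : ℕ → ℕ, Set.InjOn f ↑F.verts ∧ (∀ v ∈ F.verts, f v ∈ H.verts) ∧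
    ∀ e ∈ F.edges, e.image f ∈ H.edges

/-- The subgraph of `H` induced on `S`. -/
def induce (H : HGraph r) (S : Finset ℕ) : HGraph r :=
  ofEdges r (H.verts ∩ S) (H.edges.filter fun e => e ⊆ S)

/-- Delete a vertex from `H`. -/
def deleteVert (H : HGraph r) (v : ℕ) : HGraph r :=
  ofEdges r (H.verts.erase v) (H.edges.filter fun e => v ∉ e)

/-- The degree of a vertex. -/
def deg (H : HGraph r) (v : ℕ) : ℕ := (H.edges.filter fun e => v ∈ e).card

/-- The maximum degree `Δ(H)`. -/
def maxDeg (H : HGraph r) : ℕ := H.verts.sup H.deg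

/-- The minimum degree `δ(H)`. -/
def minDeg (H : HGraph r) : ℕ :=
  if h : H.verts.Nonempty then H.verts.inf' h H.deg else 0

/-- The average degree `d(H) = r·|E(H)|/|V(H)|`. -/
noncomputable def avgDeg (H : HGraph r) : ℝ :=
  (r : ℝ) * (H.edges.card : ℝ) / (H.verts.card : ℝ)

/-- `H` contains `k` pairwise vertex-disjoint copies of `F`, i.e. `ν(F,H) ≥ k`. -/
def HasMatching (F H : HGraph r) (k : ℕ) : Prop :=
  ∃ S : Fin k → Finset ℕ,
    (∀ i, S i ⊆ H.verts ∧ (S i).card = F.verts.card) ∧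
    (∀ i j, i ≠ j → Disjoint (S i) (S j)) ∧
    ∀ i, F.IsCopyIn (H.induce (S i))

/-- Isomorphism of hypergraphs. -/
def Iso (G H : HGraph r) : Prop :=
  ∃ f : ℕ → ℕ, Set.BijOn f ↑G.verts ↑H.verts ∧
    ∀ e ∈ Finset.powersetCard r G.verts, (e ∈ G.edges ↔ e.image f ∈ H.edges)

/-- The join `G ⋈ H`: all edges of `G`, all edges of `H`, and all `r`-sets meeting
both vertex sets. -/
def join (G H : HGraph r) : HGraph r :=
  ofEdges r (G.verts ∪ H.verts)
    (G.edges ∪ H.edges ∪ ((Finset.powersetCard r (G.verts ∪ H.verts)).filter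
      fun e => (e ∩ G.verts).Nonempty ∧ (e ∩ H.verts).Nonempty))

end HGraph

/-- The complete `r`-graph on a vertex set `S`. -/
def completeOn (r : ℕ) (S : Finset ℕ) : HGraph r :=
  HGraph.ofEdges r S (Finset.powersetCard r S)

/-- The `r`-graph on `V` with no edges. -/
def emptyOn (r : ℕ) (V : Finset ℕ) : HGraph r := HGraph.ofEdges r V ∅

/-- The Turán number `ex(n,F)`. -/
noncomputable def exN (r n : ℕ) (F : HGraph r) : ℕ :=
  sSup {m | ∃ H : HGraph r, H.verts.card = n ∧ ¬ F.IsCopyIn H ∧ H.edges.card = m}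

/-- `d(n,F) = r·ex(n,F)/n`. -/
noncomputable def dN (r n : ℕ) (F : HGraph r) : ℝ := (r : ℝ) * (exN r n F : ℝ) / (n : ℝ)

/-- `δ(n,F) = ex(n,F) − ex(n−1,F)` (as a real number). -/
noncomputable def deltaN (r n : ℕ) (F : HGraph r) : ℝ := (exN r n F : ℝ) - (exN r (n-1) F : ℝ)

/-- `x` is the Turán density `π(F)`, i.e. the limit of `ex(n,F)/C(n,r)`. -/
def HasTuranDensity (r : ℕ) (F : HGraph r) (x : ℝ) : Prop :=
  Tendsto (fun n : ℕ => (exN r n F : ℝ) / (n.choose r : ℝ)) atTop (nhds x)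

/-- `ex(n,(t+1)F)`: the maximum number of edges of an `n`-vertex `r`-graph with no
`t+1` pairwise vertex-disjoint copies of `F`. -/
noncomputable def exMatchN (r n t : ℕ) (F : HGraph r) : ℕ :=
  sSup {m | ∃ H : HGraph r, H.verts.card = n ∧ ¬ F.HasMatching H (t+1) ∧ H.edges.card = m}

/-- `H ∈ EX(n,F)`. -/
def IsExtremalFree (r n : ℕ) (F H : HGraph r) : Prop :=
  H.verts.card = n ∧ ¬ F.IsCopyIn H ∧ H.edges.card = exN r n F

/-- `H ∈ EX(n,(t+1)F)`. -/
def IsExtremalMatchingFree (r n t : ℕ) (F H : HGraph r) : Prop :=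
  H.verts.card = n ∧ ¬ F.HasMatching H (t+1) ∧ H.edges.card = exMatchN r n t F

/-- `F` is `(f1, f2)`-bounded at `n`. -/
def BoundedAt (r n : ℕ) (F : HGraph r) (f1 f2 : ℝ) : Prop :=
  ∀ H : HGraph r, H.verts.card = n → ¬ F.IsCopyIn H →
    dN r n F - f1 ≤ H.avgDeg → (H.maxDeg : ℝ) ≤ dN r n F + f2

/-- `ex(·,F)` is `g`-smooth at `n`: `|δ(n,F) − d(n−1,F)| ≤ g(n)`. -/
def SmoothAt (r n : ℕ) (F : HGraph r) (g : ℝ) : Prop :=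
  |deltaN r n F - dN r (n-1) F| ≤ g

/-- The collection `H 0, …, H t` (on a common vertex set) has a rainbow `F`-matching. -/
def HasRainbowMatching (r t : ℕ) (F : HGraph r) (H : Fin (t+1) → HGraph r) : Prop :=
  ∃ S : Fin (t+1) → Finset ℕ,
    (∀ i, S i ⊆ (H i).verts ∧ (S i).card = F.verts.card) ∧
    (∀ i j, i ≠ j → Disjoint (S i) (S j)) ∧
    ∀ i, F.IsCopyIn ((H i).induce (S i))

/-!  Patterns -/

/-- An `r`-uniform pattern: a finite index set together with a collection of
`r`-multisets on it. -/
structure Pattern (r : ℕ) where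
  idx : Finset ℕ
  mE : Finset (Multiset ℕ)
  card_eq : ∀ s ∈ mE, Multiset.card s = r
  mem_idx : ∀ s ∈ mE, ∀ i ∈ s, i ∈ idx

namespace Pattern

variable {r : ℕ}

/-- The pattern `P − i`. -/
def erase (P : Pattern r) (i : ℕ) : Pattern r where
  idx := P.idx.erase i
  mE := P.mE.filter fun s => i ∉ s
  card_eq := fun s hs => P.card_eq s (Finset.mem_filter.mp hs).1
  mem_idx := by
    intro s hs j hj
    have h1 := Finset.mem_filter.mp hs
    refine Finset.mem_erase.mpr ⟨?_, P.mem_idx s h1.1 j hj⟩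
    rintro rfl
    exact h1.2 hj

/-- `H` is a `P`-construction: a blowup of the pattern `P`. -/
def IsConstruction (P : Pattern r) (H : HGraph r) : Prop :=
  ∃ part : ℕ → ℕ, (∀ v ∈ H.verts, part v ∈ P.idx) ∧
    ∀ e : Finset ℕ, e ∈ H.edges ↔ (e ⊆ H.verts ∧ e.card = r ∧ Multiset.map part e.val ∈ P.mE)

/-- `H` is a `P`-subconstruction: a subgraph of a `P`-construction. -/
def IsSubconstruction (P : Pattern r) (H : HGraph r) : Prop :=
  ∃ G : HGraph r, P.IsConstruction G ∧ H.verts ⊆ G.verts ∧ H.edges ⊆ G.edges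

end Pattern

/-- `Λ(P,n)`: the maximum number of edges of an `n`-vertex `P`-construction. -/
noncomputable def patEx (r : ℕ) (P : Pattern r) (n : ℕ) : ℕ :=
  sSup {m | ∃ H : HGraph r, P.IsConstruction H ∧ H.verts.card = n ∧ H.edges.card = m}

/-- The Lagrangian `λ(P) = lim Λ(P,n)/C(n,r)`. -/
noncomputable def patLagrangian (r : ℕ) (P : Pattern r) : ℝ :=
  limUnder atTop fun n : ℕ => (patEx r P n : ℝ) / (n.choose r : ℝ)

/-- The pattern `P` is minimal: `λ(P−i) < λ(P)` for all `i`. -/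
def Pattern.Minimal {r : ℕ} (P : Pattern r) : Prop :=
  ∀ i ∈ P.idx, patLagrangian r (P.erase i) < patLagrangian r P

/-- `(F,P)` is a Turán pair. -/
def IsTuranPair (r : ℕ) (F : HGraph r) (P : Pattern r) : Prop :=
  (∀ H : HGraph r, P.IsConstruction H → ¬ F.IsCopyIn H) ∧
  (∀ H : HGraph r, ¬ F.IsCopyIn H → H.edges.card = exN r H.verts.card F →
    P.IsConstruction H)

/-- `F` is edge-stable with respect to `P` (with Turán density `π`). -/
def EdgeStable (r : ℕ) (F : HGraph r) (P : Pattern r) (π : ℝ) : Prop :=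
  ∀ δ : ℝ, 0 < δ → ∃ N₀ : ℕ, ∃ ζ : ℝ, 0 < ζ ∧
    ∀ H : HGraph r, N₀ ≤ H.verts.card → ¬ F.IsCopyIn H →
      (π - ζ) * (H.verts.card.choose r : ℝ) ≤ (H.edges.card : ℝ) →
      ∃ H' : HGraph r, H'.verts ⊆ H.verts ∧ H'.edges ⊆ H.edges ∧
        (π - δ) * (H.verts.card.choose r : ℝ) ≤ (H'.edges.card : ℝ) ∧
        P.IsSubconstruction H'

/-- `F` is weakly vertex-extendable with respect to `P` (with Turán density `π`). -/
def WeaklyVertexExtendable (r : ℕ) (F : HGraph r) (P : Pattern r) (π : ℝ) : Prop :=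
  ∀ δ : ℝ, 0 < δ → ∃ N₀ : ℕ, ∃ ζ : ℝ, 0 < ζ ∧
    ∀ H : HGraph r, N₀ ≤ H.verts.card → ¬ F.IsCopyIn H →
      (π - ζ) * (((H.verts.card - 1).choose (r-1) : ℕ) : ℝ) ≤ (H.minDeg : ℝ) →
      ∀ v ∈ H.verts, P.IsSubconstruction (H.deleteVert v) →
        (H.deg v : ℝ) ≤ (π + δ) * (((H.verts.card - 1).choose (r-1) : ℕ) : ℝ)

/-- `F` is degree-stable with respect to `P` (with Turán density `π`). -/
def DegreeStable (r : ℕ) (F : HGraph r) (P : Pattern r) (π : ℝ) : Prop :=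
  ∃ ζ : ℝ, 0 < ζ ∧ ∃ N₀ : ℕ,
    ∀ H : HGraph r, N₀ ≤ H.verts.card → ¬ F.IsCopyIn H →
      (π - ζ) * (((H.verts.card - 1).choose (r-1) : ℕ) : ℝ) ≤ (H.minDeg : ℝ) →
      P.IsSubconstruction H

/-!  Concrete constructions -/

/-- The generalized Turán graph `T_r(·,ℓ)` on vertex set `V` (parts are residue
classes mod `ℓ`; on an interval these are balanced). -/
def turanOn (r ℓ : ℕ) (V : Finset ℕ) : HGraph r :=
  HGraph.ofEdges r V ((Finset.powersetCard r V).filter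
    fun e => ∀ u ∈ e, ∀ v ∈ e, u % ℓ = v % ℓ → u = v)

/-- The `r`-graph on `V₁ ∪ V₂` whose edges are all `r`-sets meeting both parts. -/
def crossOn (r : ℕ) (V₁ V₂ : Finset ℕ) : HGraph r :=
  HGraph.ofEdges r (V₁ ∪ V₂) ((Finset.powersetCard r (V₁ ∪ V₂)).filter
    fun e => (e ∩ V₁).Nonempty ∧ (e ∩ V₂).Nonempty)

/-- The `r`-graph on `V₁ ∪ V₂` whose edges are all `r`-sets meeting `V₁` in an odd
number of vertices. -/
def oddCross (r : ℕ) (V₁ V₂ : Finset ℕ) : HGraph r :=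
  HGraph.ofEdges r (V₁ ∪ V₂) ((Finset.powersetCard r (V₁ ∪ V₂)).filter
    fun e => Odd (e ∩ V₁).card)

/-- The Fano plane. -/
def fano : HGraph 3 :=
  HGraph.ofEdges 3 (Finset.Icc 1 7)
    {({1,2,3} : Finset ℕ), {3,4,5}, {5,6,1}, {1,7,4}, {2,7,5}, {3,7,6}, {2,4,6}}

/-- The generalized triangle `𝕋_r`, with edges `{1,…,r}`, `{1,…,r−1,r+1}` and
`{r,…,2r−1}`. -/
def genTri (r : ℕ) : HGraph r :=
  HGraph.ofEdges r (Finset.Icc 1 (2*r - 1))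
    {Finset.Icc 1 r, Finset.Icc 1 (r-1) ∪ {r+1}, Finset.Icc r (2*r - 1)}

/-- `G` is a blowup of the `r`-graph `W` (viewing `W` as a pattern). -/
def IsBlowupOf {r : ℕ} (W G : HGraph r) : Prop :=
  ∃ part : ℕ → ℕ, (∀ v ∈ G.verts, part v ∈ W.verts) ∧
    ∀ e : Finset ℕ, e ∈ G.edges ↔
      (e ⊆ G.verts ∧ e.card = r ∧ ∃ f ∈ W.edges, Multiset.map part e.val = f.val)

/-- The expansion `H^F` of an `r`-graph `F`: for every pair of vertices not covered
by an edge of `F`, add an edge consisting of this pair plus `r−2` new vertices,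
these sets of new vertices being pairwise disjoint. -/
def HGraph.expansion {r : ℕ} (F : HGraph r) : HGraph r :=
  HGraph.ofEdges r
    (F.verts ∪ (((F.verts ×ˢ F.verts).filter fun p =>
        p.1 < p.2 ∧ ∀ e ∈ F.edges, ¬ (p.1 ∈ e ∧ p.2 ∈ e)).biUnion fun p =>
      (Finset.range (r-2)).image fun s =>
        (F.verts.sup id + 1) + (p.1 * (F.verts.sup id + 1) + p.2) * r + s))
    (F.edges ∪ (((F.verts ×ˢ F.verts).filter fun p =>
        p.1 < p.2 ∧ ∀ e ∈ F.edges, ¬ (p.1 ∈ e ∧ p.2 ∈ e)).image fun p =>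
      insert p.1 (insert p.2 ((Finset.range (r-2)).image fun s =>
        (F.verts.sup id + 1) + (p.1 * (F.verts.sup id + 1) + p.2) * r + s))))

/-- A `2`-graph is a tree on `k` vertices: `k` vertices, `k−1` edges, connected. -/
def IsTreeGraph (k : ℕ) (T : HGraph 2) : Prop :=
  T.verts.card = k ∧ T.edges.card = k - 1 ∧
  ∀ S : Finset ℕ, S ⊆ T.verts → S.Nonempty → S ≠ T.verts →
    ∃ e ∈ T.edges, (e ∩ S).Nonempty ∧ (e \ S).Nonempty

/-- `T` satisfies the Erdős–Sós property for `k`: every graph with average degree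
greater than `k−2` contains `T`. -/
def ErdosSos (k : ℕ) (T : HGraph 2) : Prop :=
  ∀ G : HGraph 2, ((k : ℝ) - 2) * (G.verts.card : ℝ) < 2 * (G.edges.card : ℝ) →
    T.IsCopyIn G

/-- The `(r−2)`-expansion `Exp(T)` of a `2`-graph `T`: enlarge every edge by one
common fixed set of `r−2` new vertices. -/
def expTree (r : ℕ) (T : HGraph 2) : HGraph r :=
  HGraph.ofEdges r
    (T.verts ∪ ((Finset.range (r-2)).image fun s => T.verts.sup id + 1 + s))
    (T.edges.image fun e =>
      e ∪ ((Finset.range (r-2)).image fun s => T.verts.sup id + 1 + s))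

/-- The chromatic number of a `2`-graph. -/
noncomputable def chrom (F : HGraph 2) : ℕ :=
  sInf {k | ∃ c : ℕ → ℕ, (∀ v ∈ F.verts, c v < k) ∧
    ∀ e ∈ F.edges, ∀ u ∈ e, ∀ v ∈ e, u ≠ v → c u ≠ c v}

/-- A graph is edge-critical if deleting some edge lowers its chromatic number. -/
def EdgeCritical (F : HGraph 2) : Prop :=
  ∃ e ∈ F.edges, chrom (HGraph.ofEdges 2 F.verts (F.edges.erase e)) < chrom F

/-- `H` is semibipartite: the vertex set splits into `V₁ ∪ V₂` so that every edge
has exactly one vertex in `V₁`. -/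
def Semibipartite (r : ℕ) (H : HGraph r) : Prop :=
  ∃ V₁ ⊆ H.verts, ∀ e ∈ H.edges, (e ∩ V₁).card = 1

/-- `H` is a `K_ℓ^r`-subconstruction, i.e. an `ℓ`-partite `r`-graph. -/
def IsKlSub (r ℓ : ℕ) (H : HGraph r) : Prop :=
  ∃ f : ℕ → ℕ, (∀ v ∈ H.verts, f v < ℓ) ∧
    ∀ e ∈ H.edges, ∀ u ∈ e, ∀ v ∈ e, f u = f v → u = v

/-- The Lagrangian `λ(W)` of an `r`-graph `W`, viewing `W` as a pattern. -/
noncomputable def hgLagrangian (r : ℕ) (W : HGraph r) : ℝ :=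
  limUnder atTop fun n : ℕ =>
    ((sSup {m | ∃ G : HGraph r, IsBlowupOf W G ∧ G.verts.card = n ∧ G.edges.card = m} : ℕ) : ℝ)
      / (n.choose r : ℝ)

/-- The `r`-graph `B(r,ℓ+1)`. -/
def BGraph (r ℓ : ℕ) : HGraph r :=
  HGraph.ofEdges r (Finset.Icc 1 (ℓ+1))
    (insert (Finset.Icc 1 r)
      ((Finset.powersetCard r (Finset.Icc 2 (ℓ+1))).filter
        fun e => (e ∩ Finset.Icc 2 r).card ≤ 1))

/-- The `r`-uniform matching of size two, `M_2^r`. -/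
def matching2 (r : ℕ) : HGraph r :=
  HGraph.ofEdges r (Finset.Icc 1 (2*r)) {Finset.Icc 1 r, Finset.Icc (r+1) (2*r)}

/-- The expanded triangle `𝓒_3^{2r}`. -/
def expandedTriangle (r : ℕ) : HGraph (2*r) :=
  HGraph.ofEdges (2*r) (Finset.Icc 1 (3*r))
    {Finset.Icc 1 (2*r), Finset.Icc (r+1) (3*r), Finset.Icc 1 r ∪ Finset.Icc (2*r+1) (3*r)}

/-- The `4`-graph `𝔽_{4,3}`. -/
def F43 : HGraph 4 :=
  HGraph.ofEdges 4 (Finset.Icc 1 7)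
    {({1,2,3,4} : Finset ℕ), {1,2,3,5}, {1,2,3,6}, {1,2,3,7}, {4,5,6,7}}

/-- The `3`-graph `𝔽_{3,2}`. -/
def F32 : HGraph 3 :=
  HGraph.ofEdges 3 (Finset.Icc 1 5)
    {({1,2,3} : Finset ℕ), {1,2,4}, {1,2,5}, {3,4,5}}

/-- `H` contains pairwise vertex-disjoint copies of `F i`, `ts i` many of each. -/
def HasMixedMatching (r k : ℕ) (F : Fin k → HGraph r) (ts : Fin k → ℕ)
    (H : HGraph r) : Prop :=
  ∃ S : (i : Fin k) → Fin (ts i) → Finset ℕ,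
    (∀ i j, S i j ⊆ H.verts ∧ (S i j).card = (F i).verts.card) ∧
    (∀ p q : Σ i : Fin k, Fin (ts i), p ≠ q → Disjoint (S p.1 p.2) (S q.1 q.2)) ∧
    ∀ i j, (F i).IsCopyIn (H.induce (S i j))

/-- `ex(n, ⊔ᵢ tᵢ Fᵢ)`. -/
noncomputable def exMixedN (r k : ℕ) (F : Fin k → HGraph r) (ts : Fin k → ℕ)
    (n : ℕ) : ℕ :=
  sSup {m | ∃ H : HGraph r, H.verts.card = n ∧ ¬ HasMixedMatching r k F ts H ∧
    H.edges.card = m}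

/-- `ex(n, {F₁,…,F_k})`. -/
noncomputable def exFamN (r k : ℕ) (F : Fin k → HGraph r) (n : ℕ) : ℕ :=
  sSup {m | ∃ H : HGraph r, H.verts.card = n ∧ (∀ i, ¬ (F i).IsCopyIn H) ∧
    H.edges.card = m}


namespace FC
open Finset

/-- No system of distinct representatives. -/
def NS (m1 m2 m3 : Finset (Fin 4)) : Prop :=
  ∀ i ∈ m1, ∀ j ∈ m2, ∀ k ∈ m3, i = j ∨ i = k ∨ j = k

instance (m1 m2 m3 : Finset (Fin 4)) : Decidable (NS m1 m2 m3) := by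
  unfold NS; infer_instance

set_option maxRecDepth 100000 in
set_option maxHeartbeats 4000000 in
lemma ns_card : ∀ m1 m2 m3 : Finset (Fin 4), NS m1 m2 m3 →
    m1.card + m2.card + m3.card ≤ 8 ∧
    3 * (m1.card + m2.card) + 4 * min 4 (m3.card + 1) ≤ 28 ∧
    (m2.card = 4 → m3.card = 4 → m1.card = 0) ∧
    (3 ≤ m2.card → 3 ≤ m3.card → m1.card = 0) := by
  decide

set_option maxRecDepth 100000 in
set_option maxHeartbeats 4000000 in
lemma ns_three : ∀ a a' b b' c c' : Fin 4,
    NS ({a}ᶜ ∩ {a'}ᶜ) ({b}ᶜ ∩ {b'}ᶜ) ({c}ᶜ ∩ {c'}ᶜ) →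
    a ≠ a' ∧ (b = a ∧ b' = a' ∨ b = a' ∧ b' = a) ∧ (c = a ∧ c' = a' ∨ c = a' ∧ c' = a) := by
  decide

/-- A symmetric, irreflexive, Fano-free ternary relation. -/
structure Good (E : ℕ → ℕ → ℕ → Prop) : Prop where
  s12 : ∀ x y z, E x y z → E y x z
  s23 : ∀ x y z, E x y z → E x z y
  irr : ∀ x y, ¬ E x x y
  ff : ∀ p q r x y z w, E p q r → E p x y → E p z w → E q x z → E q y w →
    E r x w → E r y z → False

/-- `s` spans a complete 3-graph on four vertices. -/
def K4 (E : ℕ → ℕ → ℕ → Prop) (s : Fin 4 → ℕ) : Prop :=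
  ∀ i j k, i ≠ j → i ≠ k → j ≠ k → E (s i) (s j) (s k)

open Classical in
/-- colours of a pair. -/
noncomputable def C (E : ℕ → ℕ → ℕ → Prop) (s : Fin 4 → ℕ) (x y : ℕ) : Finset (Fin 4) :=
  univ.filter fun i => E (s i) x y

/-- weight of a pair. -/
noncomputable def w (E : ℕ → ℕ → ℕ → Prop) (s : Fin 4 → ℕ) (x y : ℕ) : ℕ := (C E s x y).card

section
variable {E : ℕ → ℕ → ℕ → Prop} {s : Fin 4 → ℕ}

lemma mem_C {x y : ℕ} {i : Fin 4} : i ∈ C E s x y ↔ E (s i) x y := by simp [C]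

lemma C_comm (hE : Good E) (x y : ℕ) : C E s x y = C E s y x := by
  ext i; simp only [mem_C]; exact ⟨hE.s23 _ _ _, hE.s23 _ _ _⟩

lemma w_comm (hE : Good E) (x y : ℕ) : w E s x y = w E s y x := by
  unfold w; rw [C_comm hE]

lemma w_self (hE : Good E) (x : ℕ) : w E s x x = 0 := by
  unfold w
  rw [card_eq_zero, eq_empty_iff_forall_notMem]
  intro i hi
  rw [mem_C] at hi
  exact hE.irr _ _ (hE.s23 _ _ _ (hE.s12 _ _ _ hi))

lemma w_le (x y : ℕ) : w E s x y ≤ 4 := by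
  unfold w; exact (card_le_univ _).trans (by simp)

lemma ns_C (hE : Good E) (hs : K4 E s) (x y z u : ℕ) :
    NS (C E s x y ∩ C E s z u) (C E s x z ∩ C E s y u) (C E s x u ∩ C E s y z) := by
  intro i hi j hj k hk
  by_contra! h
  simp only [mem_inter, mem_C] at hi hj hk
  exact hE.ff _ _ _ x y z u (hs i j k h.1 h.2.1 h.2.2) hi.1 hi.2 hj.1 hj.2 hk.1 hk.2

lemma card_inter4 (a b : Finset (Fin 4)) : a.card + b.card ≤ 4 + (a ∩ b).card := by
  have h1 := card_union_add_card_inter a b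
  have h2 : (a ∪ b).card ≤ 4 := (card_le_univ _).trans (by simp)
  omega

lemma eq_univ_of_w {x y : ℕ} (h : w E s x y = 4) : C E s x y = univ := by
  apply eq_univ_of_card; simpa [w] using h

lemma four_set (hE : Good E) (hs : K4 E s) (x y z u : ℕ) :
    w E s x y + w E s z u + (w E s x z + w E s y u) + (w E s x u + w E s y z) ≤ 20 := by
  have h := (ns_card _ _ _ (ns_C hE hs x y z u)).1
  have h1 := card_inter4 (C E s x y) (C E s z u)
  have h2 := card_inter4 (C E s x z) (C E s y u)
  have h3 := card_inter4 (C E s x u) (C E s y z)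
  unfold w; omega

/-- key inequality on heavy triangles -/
lemma heavy (hE : Good E) (hs : K4 E s) {x y z : ℕ} (h1 : w E s x y = 4) (h2 : w E s x z = 4)
    (h3 : 3 ≤ w E s y z) (u : ℕ) :
    3 * (w E s x u + w E s y u + w E s z u) + w E s x u ≤ 28 := by
  have h := (ns_card _ _ _ (ns_C hE hs x y z u)).2.1
  rw [eq_univ_of_w h1, eq_univ_of_w h2, univ_inter, univ_inter] at h
  have h4 := card_inter4 (C E s x u) (C E s y z)
  have h5 := w_le (E := E) (s := s) x u
  unfold w at *; omega

/-- crossing four-cycles force disjoint colours -/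
lemma opp_disj (hE : Good E) (hs : K4 E s) {x y z u : ℕ} (h1 : w E s x z = 4) (h2 : w E s y u = 4)
    (h3 : w E s x u = 4) (h4 : w E s y z = 4) : C E s x y ∩ C E s z u = ∅ := by
  have h := (ns_card _ _ _ (ns_C hE hs x y z u)).2.2.1
  rw [eq_univ_of_w h1, eq_univ_of_w h2, eq_univ_of_w h3, eq_univ_of_w h4] at h
  simpa using h

lemma no_mixed (hE : Good E) (hs : K4 E s) {x y z u : ℕ} (h1 : w E s x z = 4) (h2 : 3 ≤ w E s y u)
    (h3 : 3 ≤ w E s x u) (h4 : w E s y z = 4) (h5 : 2 ≤ w E s x y) (h6 : 3 ≤ w E s z u) : False := by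
  have h := (ns_card _ _ _ (ns_C hE hs x y z u)).2.2.2
  rw [eq_univ_of_w h1, eq_univ_of_w h4, univ_inter, inter_univ] at h
  have h7 := card_inter4 (C E s x y) (C E s z u)
  unfold w at *; omega

lemma exists_miss {x y : ℕ} (h : w E s x y = 3) : ∃ c, C E s x y = {c}ᶜ := by
  have : ((C E s x y)ᶜ).card = 1 := by
    rw [card_compl]; unfold w at h; simp [h]
  obtain ⟨c, hc⟩ := card_eq_one.mp this
  exact ⟨c, by rw [← hc, compl_compl]⟩

/-- no five vertices with all weights three -/
lemma no_five (hE : Good E) (hs : K4 E s) (a b c d e : ℕ)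
    (hab : w E s a b = 3) (hac : w E s a c = 3) (had : w E s a d = 3) (hae : w E s a e = 3)
    (hbc : w E s b c = 3) (hbd : w E s b d = 3) (hbe : w E s b e = 3) (hcd : w E s c d = 3)
    (hce : w E s c e = 3) (hde : w E s d e = 3) : False := by
  obtain ⟨ab, hab⟩ := exists_miss hab
  obtain ⟨ac, hac⟩ := exists_miss hac
  obtain ⟨ad, had⟩ := exists_miss had
  obtain ⟨ae, hae⟩ := exists_miss hae
  obtain ⟨bc, hbc⟩ := exists_miss hbc
  obtain ⟨bd, hbd⟩ := exists_miss hbd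
  obtain ⟨be, hbe⟩ := exists_miss hbe
  obtain ⟨cd, hcd⟩ := exists_miss hcd
  obtain ⟨ce, hce⟩ := exists_miss hce
  obtain ⟨de, hde⟩ := exists_miss hde
  have h1 := ns_C hE hs a b c d
  have h2 := ns_C hE hs a b c e
  have h3 := ns_C hE hs a b d e
  have h4 := ns_C hE hs a c d e
  have h5 := ns_C hE hs b c d e
  simp only [hab, hac, had, hae, hbc, hbd, hbe, hcd, hce, hde] at h1 h2 h3 h4 h5
  obtain ⟨p1, q1, r1⟩ := ns_three _ _ _ _ _ _ h1
  obtain ⟨p2, q2, r2⟩ := ns_three _ _ _ _ _ _ h2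
  obtain ⟨p3, q3, r3⟩ := ns_three _ _ _ _ _ _ h3
  obtain ⟨p4, q4, r4⟩ := ns_three _ _ _ _ _ _ h4
  obtain ⟨p5, q5, r5⟩ := ns_three _ _ _ _ _ _ h5
  clear h1 h2 h3 h4 h5 hab hac had hae hbc hbd hbe hcd hce hde hs hE
  grind

end

/-- weighted degree into `U` -/
noncomputable def wd (E : ℕ → ℕ → ℕ → Prop) (s : Fin 4 → ℕ) (U : Finset ℕ) (x : ℕ) : ℕ :=
  ∑ y ∈ U, w E s x y

/-- twice the total weight in `U` -/
noncomputable def ft (E : ℕ → ℕ → ℕ → Prop) (s : Fin 4 → ℕ) (U : Finset ℕ) : ℕ :=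
  ∑ x ∈ U, wd E s U x

section
variable {E : ℕ → ℕ → ℕ → Prop} {s : Fin 4 → ℕ}

lemma wd_erase {U : Finset ℕ} {v : ℕ} (hv : v ∈ U) (x : ℕ) :
    wd E s U x = wd E s (U.erase v) x + w E s x v := by
  unfold wd; rw [sum_erase_add _ _ hv]

lemma ft_erase (hE : Good E) {U : Finset ℕ} {v : ℕ} (hv : v ∈ U) :
    ft E s U = ft E s (U.erase v) + 2 * wd E s (U.erase v) v := by
  have h1 : ft E s U = ∑ x ∈ U.erase v, wd E s U x + wd E s U v := by
    unfold ft; rw [sum_erase_add _ _ hv]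
  have h2 : ∑ x ∈ U.erase v, wd E s U x = ft E s (U.erase v) + wd E s (U.erase v) v := by
    unfold ft
    conv_rhs => rw [show wd E s (U.erase v) v = ∑ x ∈ U.erase v, w E s x v from
      sum_congr rfl fun y _ => w_comm hE _ _]
    rw [← sum_add_distrib]
    exact sum_congr rfl fun x _ => wd_erase hv x
  have h3 := wd_erase (E := E) (s := s) hv v
  rw [w_self hE] at h3
  omega

lemma ft_le (hE : Good E) (hs : K4 E s) : ∀ n (U : Finset ℕ), U.card = n → ft E s U ≤ 3 * n ^ 2 := by
  intro n
  induction n using Nat.strong_induction_on with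
  | _ n ih =>
  intro U hU
  by_cases h4 : ∃ x ∈ U, ∃ y ∈ U, w E s x y = 4
  · obtain ⟨x, hx, y, hy, hxy⟩ := h4
    have hne : y ≠ x := by rintro rfl; rw [w_self hE] at hxy; omega
    have hy1 : y ∈ U.erase x := mem_erase.2 ⟨hne, hy⟩
    have e1 := ft_erase (s := s) hE hx
    have e2 := ft_erase (s := s) hE hy1
    have e3 := wd_erase (E := E) (s := s) hy1 x
    have c1 := card_erase_of_mem hx
    have c2 := card_erase_of_mem hy1
    have p1 : 0 < U.card := card_pos.2 ⟨x, hx⟩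
    have p2 : 0 < (U.erase x).card := card_pos.2 ⟨y, hy1⟩
    set U2 := (U.erase x).erase y with hU2
    by_cases h7 : ∃ z ∈ U2, 7 ≤ w E s x z + w E s y z
    · obtain ⟨z, hz, hzz⟩ := h7
      have e4 := ft_erase (s := s) hE hz
      have e5 := wd_erase (E := E) (s := s) hz x
      have e6 := wd_erase (E := E) (s := s) hz y
      have c3 := card_erase_of_mem hz
      have p3 : 0 < U2.card := card_pos.2 ⟨z, hz⟩
      set U3 := U2.erase z with hU3
      have hsum : wd E s U3 x + wd E s U3 y + wd E s U3 z ≤ U3.card * 9 := by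
        unfold wd
        rw [← sum_add_distrib, ← sum_add_distrib]
        refine sum_le_card_nsmul _ _ _ fun q _ => ?_
        have := four_set hE hs x y z q
        have g1 := w_comm (s := s) hE z q
        omega
      have h8 := w_le (E := E) (s := s) x z
      have h9 := w_le (E := E) (s := s) y z
      obtain ⟨m, hm⟩ : ∃ m, n = m + 3 := ⟨n - 3, by omega⟩
      have hc : U3.card = m := by omega
      have hi := ih m (by omega) U3 hc
      rw [hc] at hsum
      subst hm
      nlinarith
    · push Not at h7
      have hsum : wd E s U2 x + wd E s U2 y ≤ U2.card * 6 := by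
        unfold wd
        rw [← sum_add_distrib]
        refine sum_le_card_nsmul _ _ _ fun q hq => ?_
        have := h7 q hq
        omega
      obtain ⟨m, hm⟩ : ∃ m, n = m + 2 := ⟨n - 2, by omega⟩
      have hc : U2.card = m := by omega
      have hi := ih m (by omega) U2 hc
      rw [hc] at hsum
      subst hm
      nlinarith
  · push Not at h4
    have : ft E s U ≤ U.card * (U.card * 3) := by
      unfold ft
      refine sum_le_card_nsmul _ _ _ fun x hx => ?_
      unfold wd
      refine sum_le_card_nsmul _ _ _ fun y hy => ?_
      have := h4 x hx y hy
      have := w_le (E := E) (s := s) x y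
      omega
    rw [hU] at this
    nlinarith

/-- minimum weighted degree condition -/
def MinDeg (E : ℕ → ℕ → ℕ → Prop) (s : Fin 4 → ℕ) (U : Finset ℕ) (δ : ℝ) : Prop :=
  ∀ x ∈ U, (3 - δ) * U.card ≤ wd E s U x

lemma light (hE : Good E) (hs : K4 E s) {U : Finset ℕ} {δ : ℝ} (hδ : δ ≤ 1 / 1000)
    (hm : MinDeg E s U δ) {x y z : ℕ} (hx : x ∈ U) (hy : y ∈ U) (hz : z ∈ U)
    (h1 : w E s x y = 4) (h2 : w E s x z = 4) : w E s y z ≤ 2 := by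
  by_contra h3
  have hsum : 3 * (wd E s U x + wd E s U y + wd E s U z) + wd E s U x ≤ U.card * 28 := by
    unfold wd
    rw [← sum_add_distrib, ← sum_add_distrib, mul_sum, ← sum_add_distrib]
    exact sum_le_card_nsmul _ _ _ fun q _ => heavy hE hs h1 h2 (by omega) q
  have a := hm x hx
  have b := hm y hy
  have c := hm z hz
  have hp : (0 : ℝ) < U.card := by exact_mod_cast card_pos.2 ⟨x, hx⟩
  have hsum' : 3 * ((wd E s U x : ℝ) + wd E s U y + wd E s U z) + wd E s U x ≤ U.card * 28 := by
    exact_mod_cast hsum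
  nlinarith

lemma sum_six (hE : Good E) (hs : K4 E s) {U : Finset ℕ} {δ : ℝ} (hδ : δ ≤ 1 / 1000)
    (hm : MinDeg E s U δ) {x y z : ℕ} (hx : x ∈ U) (hy : y ∈ U) (hz : z ∈ U)
    (h1 : w E s x y = 4) : w E s x z + w E s y z ≤ 6 := by
  by_contra h
  have a := w_le (E := E) (s := s) x z
  have b := w_le (E := E) (s := s) y z
  by_cases c : w E s x z = 4
  · have := light hE hs hδ hm hx hy hz h1 c; omega
  · have d : w E s y z = 4 := by omega
    have := light hE hs hδ hm hy hx hz (by rw [w_comm hE]; exact h1) d; omega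

lemma exists_avoid {U X1 X2 X3 X4 : Finset ℕ} (hU : U.Nonempty) (h1 : 4 * X1.card < U.card)
    (h2 : 4 * X2.card < U.card) (h3 : 4 * X3.card < U.card) (h4 : 4 * X4.card < U.card) :
    ∃ z ∈ U, z ∉ X1 ∧ z ∉ X2 ∧ z ∉ X3 ∧ z ∉ X4 := by
  by_contra! h
  have hs : U ⊆ X1 ∪ X2 ∪ X3 ∪ X4 := by
    intro z hz
    have := h z hz
    simp only [mem_union]
    tauto
  have c1 := card_le_card hs
  have c2 := card_union_le (X1 ∪ X2 ∪ X3) X4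
  have c3 := card_union_le (X1 ∪ X2) X3
  have c4 := card_union_le X1 X2
  omega

lemma exists_heavy_vertex (hE : Good E) (hs : K4 E s) {U : Finset ℕ} {δ : ℝ} (hδ : δ ≤ 1 / 1000)
    (hU : U.Nonempty) (hm : MinDeg E s U δ) :
    ∃ x ∈ U, (U.card : ℝ) / 10 < (U.filter fun y => w E s x y = 4).card := by
  by_contra! hc
  have key : ∀ x ∈ U, 4 * (U.filter fun y => w E s x y ≠ 3).card < U.card := by
    intro x hx
    have h1 : wd E s U x + (U.filter fun y => w E s x y ≠ 3).card ≤
        3 * U.card + 2 * (U.filter fun y => w E s x y = 4).card := by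
      rw [card_filter, card_filter, mul_sum, mul_comm 3, ← smul_eq_mul, ← sum_const]
      unfold wd
      rw [← sum_add_distrib, ← sum_add_distrib]
      refine sum_le_sum fun y _ => ?_
      have := w_le (E := E) (s := s) x y
      split_ifs <;> omega
    have h2 := hm x hx
    have h3 := hc x hx
    have hp : (0 : ℝ) < U.card := by exact_mod_cast card_pos.2 ⟨x, hx⟩
    have h1' : (wd E s U x : ℝ) + (U.filter fun y => w E s x y ≠ 3).card ≤
        3 * U.card + 2 * (U.filter fun y => w E s x y = 4).card := by exact_mod_cast h1
    have : (4 : ℝ) * (U.filter fun y => w E s x y ≠ 3).card < U.card := by nlinarith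
    exact_mod_cast this
  have nb : ∀ x z, z ∈ U → z ∉ (U.filter fun y => w E s x y ≠ 3) → w E s x z = 3 := by
    intro x z hz h
    simp only [mem_filter, not_and, not_not] at h
    exact h hz
  obtain ⟨a, ha⟩ := hU
  have ka := key a ha
  obtain ⟨b, hb, hb1, -⟩ := exists_avoid ⟨a, ha⟩ ka ka ka ka
  have kb := key b hb
  obtain ⟨c, hc, hc1, hc2, -⟩ := exists_avoid ⟨a, ha⟩ ka kb kb kb
  have kc := key c hc
  obtain ⟨d, hd, hd1, hd2, hd3, -⟩ := exists_avoid ⟨a, ha⟩ ka kb kc kc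
  have kd := key d hd
  obtain ⟨e, he, he1, he2, he3, he4⟩ := exists_avoid ⟨a, ha⟩ ka kb kc kd
  exact no_five hE hs a b c d e (nb _ _ hb hb1) (nb _ _ hc hc1) (nb _ _ hd hd1) (nb _ _ he he1)
    (nb _ _ hc hc2) (nb _ _ hd hd2) (nb _ _ he he2) (nb _ _ hd hd3) (nb _ _ he he3) (nb _ _ he he4)

/-- the weight-four neighbourhood -/
noncomputable def N4 (E : ℕ → ℕ → ℕ → Prop) (s : Fin 4 → ℕ) (U : Finset ℕ) (x : ℕ) : Finset ℕ :=
  U.filter fun q => w E s x q = 4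

lemma mem_N4 {U : Finset ℕ} {x q : ℕ} : q ∈ N4 E s U x ↔ q ∈ U ∧ w E s x q = 4 := by simp [N4]

/-- pairs with small weight sum -/
noncomputable def bad (E : ℕ → ℕ → ℕ → Prop) (s : Fin 4 → ℕ) (U : Finset ℕ) (x y : ℕ) : Finset ℕ :=
  U.filter fun q => w E s x q + w E s y q ≤ 5

lemma mem_bad {U : Finset ℕ} {x y q : ℕ} :
    q ∈ bad E s U x y ↔ q ∈ U ∧ w E s x q + w E s y q ≤ 5 := by simp [bad]

noncomputable def mid (E : ℕ → ℕ → ℕ → Prop) (s : Fin 4 → ℕ) (U : Finset ℕ) (x y : ℕ) : Finset ℕ :=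
  U.filter fun q => w E s x q = 3 ∧ w E s y q = 3

lemma card_bad (hE : Good E) (hs : K4 E s) {U : Finset ℕ} {δ : ℝ} (hδ : δ ≤ 1 / 1000)
    (hm : MinDeg E s U δ) {x y : ℕ} (hx : x ∈ U) (hy : y ∈ U) (h1 : w E s x y = 4) :
    ((bad E s U x y).card : ℝ) ≤ 2 * δ * U.card := by
  have h : wd E s U x + wd E s U y + (bad E s U x y).card ≤ U.card * 6 := by
    unfold bad
    rw [card_filter, ← smul_eq_mul, ← sum_const]
    unfold wd
    rw [← sum_add_distrib, ← sum_add_distrib]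
    refine sum_le_sum fun q hq => ?_
    have := sum_six hE hs hδ hm hx hy hq h1
    split_ifs <;> omega
  have h' : (wd E s U x : ℝ) + wd E s U y + (bad E s U x y).card ≤ U.card * 6 := by exact_mod_cast h
  have a := hm x hx
  have b := hm y hy
  linarith

lemma ptw (hE : Good E) (hs : K4 E s) {U : Finset ℕ} {δ : ℝ} (hδ : δ ≤ 1 / 1000)
    (hm : MinDeg E s U δ) {x y : ℕ} (hx : x ∈ U) (hy : y ∈ U) (h1 : w E s x y = 4)
    {z : ℕ} (hz : z ∈ N4 E s U y) {q : ℕ} (hq : q ∈ U) :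
    w E s z q + (if w E s y q = 4 then 1 else 0) ≤
      3 + (if w E s x q = 4 then 1 else 0) + (if w E s x q + w E s y q ≤ 5 then 1 else 0) := by
  rw [mem_N4] at hz
  have a := sum_six hE hs hδ hm hx hy hq h1
  have b := sum_six hE hs hδ hm hy hz.1 hq hz.2
  have c := w_le (E := E) (s := s) z q
  have d := w_le (E := E) (s := s) x q
  have e := w_le (E := E) (s := s) y q
  split_ifs <;> omega

lemma size_diff (hE : Good E) (hs : K4 E s) {U : Finset ℕ} {δ : ℝ} (hδ : δ ≤ 1 / 1000)
    (hm : MinDeg E s U δ) {x y : ℕ} (hx : x ∈ U) (hy : y ∈ U) (h1 : w E s x y = 4) :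
    ((N4 E s U y).card : ℝ) ≤ (N4 E s U x).card + 3 * δ * U.card := by
  have hb := card_bad hE hs hδ hm hx hy h1
  have h : wd E s U x + (N4 E s U y).card ≤
      3 * U.card + (N4 E s U x).card + (bad E s U x y).card := by
    unfold bad N4
    rw [card_filter, card_filter, card_filter, mul_comm 3, ← smul_eq_mul, ← sum_const]
    unfold wd
    rw [← sum_add_distrib, ← sum_add_distrib, ← sum_add_distrib]
    refine sum_le_sum fun q hq => ?_
    exact ptw hE hs hδ hm hx hy h1 (mem_N4.2 ⟨hx, by rw [w_comm hE]; exact h1⟩) hq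
  have h' : (wd E s U x : ℝ) + (N4 E s U y).card ≤
      3 * U.card + (N4 E s U x).card + (bad E s U x y).card := by exact_mod_cast h
  have := hm x hx
  linarith

lemma mid_small (hE : Good E) (hs : K4 E s) {U : Finset ℕ} {δ : ℝ} (hδ : δ ≤ 1 / 1000)
    (hm : MinDeg E s U δ) {x y : ℕ} (hx : x ∈ U) (hy : y ∈ U) (h1 : w E s x y = 4)
    (hbig : 2 * δ * U.card < (N4 E s U y).card) :
    ((mid E s U x y).card : ℝ) ≤ 6 * δ * U.card := by
  have hb := card_bad hE hs hδ hm hx hy h1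
  have hd := size_diff hE hs hδ hm hy hx (by rw [w_comm hE]; exact h1)
  obtain ⟨u, hu, hub⟩ : ∃ u ∈ N4 E s U y, u ∉ bad E s U x y := by
    apply exists_mem_notMem_of_card_lt_card
    exact_mod_cast hb.trans_lt hbig
  have hu' := mem_N4.1 hu
  have h6 := sum_six hE hs hδ hm hx hy hu'.1 h1
  have hxu : w E s x u = 2 := by
    rw [mem_bad] at hub
    have : ¬ (w E s x u + w E s y u ≤ 5) := fun h => hub ⟨hu'.1, h⟩
    omega
  have h : wd E s U u + (N4 E s U y).card + (mid E s U x y).card ≤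
      3 * U.card + (N4 E s U x).card + (bad E s U x y).card := by
    unfold bad N4 mid
    rw [card_filter, card_filter, card_filter, card_filter, mul_comm 3, ← smul_eq_mul, ← sum_const]
    unfold wd
    rw [← sum_add_distrib, ← sum_add_distrib, ← sum_add_distrib, ← sum_add_distrib]
    refine sum_le_sum fun q hq => ?_
    have hp := ptw hE hs hδ hm hx hy h1 hu hq
    by_cases hc : w E s x q = 3 ∧ w E s y q = 3
    · have : w E s u q ≤ 2 := by
        by_contra h3
        exact no_mixed hE hs (x := x) (y := u) (z := y) (u := q) h1 (by omega) (by omega)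
          (by rw [w_comm hE]; exact hu'.2) (by omega) (by omega)
      rw [if_pos hc]
      split_ifs <;> omega
    · rw [if_neg hc]; omega
  have h' : (wd E s U u : ℝ) + (N4 E s U y).card + (mid E s U x y).card ≤
      3 * U.card + (N4 E s U x).card + (bad E s U x y).card := by exact_mod_cast h
  have := hm u hu'.1
  linarith

lemma defect (hE : Good E) (hs : K4 E s) {U : Finset ℕ} {δ : ℝ} (hδ : δ ≤ 1 / 1000)
    (hm : MinDeg E s U δ) {x y : ℕ} (hx : x ∈ U) (hy : y ∈ U) (h1 : w E s x y = 4)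
    (hbig : (1 / 2 - 6 * δ) * U.card ≤ (N4 E s U y).card) {z : ℕ} (hz : z ∈ N4 E s U y) :
    (((N4 E s U y).filter fun q => w E s z q ≠ 2).card : ℝ) ≤ 13 * δ * U.card ∧
    (((N4 E s U x).filter fun q => w E s z q ≠ 4).card : ℝ) ≤ 13 * δ * U.card := by
  have hz' := mem_N4.1 hz
  have h : wd E s U z + 2 * (N4 E s U y).card + ((N4 E s U y).filter fun q => w E s z q ≠ 2).card
      + ((N4 E s U x).filter fun q => w E s z q ≠ 4).card ≤ U.card * 4 := by
    unfold N4
    rw [filter_filter, filter_filter, card_filter, card_filter, card_filter, mul_sum,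
      ← smul_eq_mul (a := U.card), ← sum_const]
    unfold wd
    rw [← sum_add_distrib, ← sum_add_distrib, ← sum_add_distrib]
    refine sum_le_sum fun q hq => ?_
    have c := w_le (E := E) (s := s) z q
    have a := sum_six hE hs hδ hm hx hy hq h1
    by_cases h4 : w E s y q = 4
    · have := light hE hs hδ hm hy hz'.1 hq hz'.2 h4
      split_ifs <;> omega
    · split_ifs <;> omega
  have h' : (wd E s U z : ℝ) + 2 * (N4 E s U y).card +
      ((N4 E s U y).filter fun q => w E s z q ≠ 2).card
      + ((N4 E s U x).filter fun q => w E s z q ≠ 4).card ≤ U.card * 4 := by exact_mod_cast h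
  have := hm z hz'.1
  have n1 : (0 : ℝ) ≤ ((N4 E s U y).filter fun q => w E s z q ≠ 2).card := by positivity
  have n2 : (0 : ℝ) ≤ ((N4 E s U x).filter fun q => w E s z q ≠ 4).card := by positivity
  constructor <;> linarith

/-- structure of nearly extremal weighted graphs -/
lemma struct (hE : Good E) (hs : K4 E s) {U : Finset ℕ} {δ : ℝ} (hδ0 : 0 < δ) (hδ : δ ≤ 1 / 1000)
    (hU : U.Nonempty) (hm : MinDeg E s U δ) :
    ∃ A ⊆ U, ∃ B ⊆ U, Disjoint A B ∧ (1 / 2 - 6 * δ) * U.card ≤ A.card ∧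
      (1 / 2 - 6 * δ) * U.card ≤ B.card ∧
      (∀ z ∈ A, ((A.filter fun q => w E s z q ≠ 2).card : ℝ) ≤ 13 * δ * U.card ∧
        ((B.filter fun q => w E s z q ≠ 4).card : ℝ) ≤ 13 * δ * U.card) ∧
      (∀ z ∈ B, ((B.filter fun q => w E s z q ≠ 2).card : ℝ) ≤ 13 * δ * U.card ∧
        ((A.filter fun q => w E s z q ≠ 4).card : ℝ) ≤ 13 * δ * U.card) := by
  obtain ⟨x, hx, hxb⟩ := exists_heavy_vertex hE hs hδ hU hm
  have hp : (0 : ℝ) < U.card := by exact_mod_cast card_pos.2 ⟨x, hx⟩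
  change (U.card : ℝ) / 10 < (N4 E s U x).card at hxb
  obtain ⟨y, hy0⟩ : (N4 E s U x).Nonempty := by
    rw [← card_pos]
    have : (0 : ℝ) < (N4 E s U x).card := by linarith
    exact_mod_cast this
  obtain ⟨hy, h1⟩ := mem_N4.1 hy0
  have h1' : w E s y x = 4 := by rw [w_comm hE]; exact h1
  have d1 := size_diff hE hs hδ hm hx hy h1
  have d2 := size_diff hE hs hδ hm hy hx h1'
  have hb := card_bad hE hs hδ hm hx hy h1
  have hmid := mid_small hE hs hδ hm hx hy h1 (by nlinarith)
  have hcov : U.card ≤ (N4 E s U y).card + (N4 E s U x).card + (mid E s U x y).card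
      + (bad E s U x y).card := by
    have : U ⊆ N4 E s U y ∪ N4 E s U x ∪ mid E s U x y ∪ bad E s U x y := by
      intro q hq
      have := sum_six hE hs hδ hm hx hy hq h1
      have c := w_le (E := E) (s := s) x q
      have d := w_le (E := E) (s := s) y q
      simp only [mem_union, N4, mid, bad, mem_filter, hq, true_and]
      omega
    have c1 := card_le_card this
    have c2 := card_union_le (N4 E s U y ∪ N4 E s U x ∪ mid E s U x y) (bad E s U x y)
    have c3 := card_union_le (N4 E s U y ∪ N4 E s U x) (mid E s U x y)
    have c4 := card_union_le (N4 E s U y) (N4 E s U x)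
    omega
  have hcov' : (U.card : ℝ) ≤ (N4 E s U y).card + (N4 E s U x).card + (mid E s U x y).card
      + (bad E s U x y).card := by exact_mod_cast hcov
  have sA : (1 / 2 - 6 * δ) * U.card ≤ (N4 E s U y).card := by nlinarith
  have sB : (1 / 2 - 6 * δ) * U.card ≤ (N4 E s U x).card := by nlinarith
  refine ⟨N4 E s U y, filter_subset _ _, N4 E s U x, filter_subset _ _, ?_, sA, sB, ?_, ?_⟩
  · rw [disjoint_left]
    intro q hq hq'
    rw [mem_N4] at hq hq'
    have := sum_six hE hs hδ hm hx hy hq.1 h1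
    omega
  · intro z hz
    exact defect hE hs hδ hm hx hy h1 sA hz
  · intro z hz
    exact defect hE hs hδ hm hy hx h1' sB hz

end

open Classical in
/-- ordered degree of `x` in `V` -/
noncomputable def dg (E : ℕ → ℕ → ℕ → Prop) (V : Finset ℕ) (x : ℕ) : ℕ :=
  ∑ y ∈ V, (V.filter fun z => E x y z).card

open Classical in
/-- how far the link of `x` is from all pairs except those inside `A` -/
noncomputable def err (E : ℕ → ℕ → ℕ → Prop) (V A : Finset ℕ) (x : ℕ) : ℕ :=
  ∑ y ∈ V, (V.filter fun z => ¬ (E x y z ↔ ¬ (y ∈ A ∧ z ∈ A))).card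

section
variable {E : ℕ → ℕ → ℕ → Prop} {s : Fin 4 → ℕ}

lemma ft_eq_dg (V : Finset ℕ) : ft E s V = ∑ i, dg E V (s i) := by
  classical
  unfold ft wd dg w C
  simp only [card_filter]
  symm
  rw [sum_comm]
  refine sum_congr rfl fun x _ => ?_
  rw [sum_comm]

lemma clean (hE : Good E) (hs : K4 E s) {V : Finset ℕ} {δ : ℝ} (hδ0 : 0 < δ) (hδ : δ ≤ 1 / 10000)
    (hn : 4 ≤ δ * V.card) (hV : (3 - δ ^ 2) * (V.card : ℝ) ^ 2 ≤ ft E s V) :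
    ∃ U ⊆ V, U.Nonempty ∧ (1 - δ) * V.card ≤ U.card ∧ MinDeg E s U (2 * δ) := by
  obtain ⟨U, hU, hmax⟩ := exists_max_image V.powerset
    (fun U => (ft E s U : ℝ) - (3 - δ) * (U.card : ℝ) ^ 2) ⟨V, mem_powerset_self V⟩
  rw [mem_powerset] at hU
  have h1 := hmax V (mem_powerset_self V)
  have h2 : (ft E s U : ℝ) ≤ 3 * (U.card : ℝ) ^ 2 := by exact_mod_cast ft_le hE hs _ U rfl
  have hn0 : (0 : ℝ) < V.card := by
    by_contra h
    have : (V.card : ℝ) = 0 := le_antisymm (not_lt.1 h) (by positivity)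
    rw [this] at hn; linarith
  have h3 : ((1 - δ) * V.card) ^ 2 ≤ (U.card : ℝ) ^ 2 := by
    have : δ * ((1 - δ) * (V.card : ℝ) ^ 2) ≤ δ * (U.card : ℝ) ^ 2 := by
      nlinarith
    have h4 := le_of_mul_le_mul_left this hδ0
    nlinarith [sq_nonneg (V.card : ℝ), mul_nonneg hδ0.le (sq_nonneg (V.card : ℝ))]
  have h4 : (1 - δ) * V.card ≤ U.card := by
    apply le_of_sq_le_sq h3 (by positivity)
  have hu : 0 < (U.card : ℝ) := by nlinarith
  refine ⟨U, hU, card_pos.1 (by exact_mod_cast hu), h4, ?_⟩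
  intro x hx
  have h5 := hmax (U.erase x) (mem_powerset.2 ((erase_subset _ _).trans hU))
  have h6 : (ft E s U : ℝ) = ft E s (U.erase x) + 2 * wd E s (U.erase x) x := by
    exact_mod_cast ft_erase hE hx
  have h7 : (wd E s U x : ℝ) = wd E s (U.erase x) x := by
    have := wd_erase (E := E) (s := s) hx x
    rw [w_self hE] at this
    exact_mod_cast this
  have h8 : ((U.erase x).card : ℝ) = U.card - 1 := by
    rw [card_erase_of_mem hx, Nat.cast_sub (card_pos.2 ⟨x, hx⟩)]; simp
  simp only [h8] at h5
  have h9 : (3 : ℝ) ≤ δ * U.card := by nlinarith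
  nlinarith

lemma sum_bad_le {V J : Finset ℕ} (P : ℕ → ℕ → Prop) [∀ y z, Decidable (P y z)]
    (_hJ : J ⊆ V) (Bad : ℕ → Finset ℕ) (β : ℝ) (hβ0 : 0 ≤ β)
    (hβ : ∀ y ∈ V, y ∉ J → ((Bad y).card : ℝ) ≤ β)
    (h : ∀ y ∈ V, y ∉ J → ∀ z ∈ V, z ∉ J → z ∉ Bad y → P y z) :
    ((∑ y ∈ V, (V.filter fun z => ¬ P y z).card : ℕ) : ℝ) ≤
      J.card * V.card + V.card * (J.card + β) := by
  push_cast
  have h1 : ∀ y ∈ V, ((V.filter fun z => ¬ P y z).card : ℝ) ≤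
      (if y ∈ J then (V.card : ℝ) else 0) + (J.card + β) := by
    intro y hy
    by_cases hyJ : y ∈ J
    · rw [if_pos hyJ]
      have : ((V.filter fun z => ¬ P y z).card : ℝ) ≤ V.card := by
        exact_mod_cast card_le_card (filter_subset _ _)
      have : (0 : ℝ) ≤ J.card := by positivity
      linarith
    · rw [if_neg hyJ]
      have hs : (V.filter fun z => ¬ P y z) ⊆ J ∪ Bad y := by
        intro z hz
        rw [mem_filter] at hz
        by_contra hc
        rw [mem_union, not_or] at hc
        exact hz.2 (h y hy hyJ z hz.1 hc.1 hc.2)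
      have h2 := (card_le_card hs).trans (card_union_le _ _)
      have h2' : ((V.filter fun z => ¬ P y z).card : ℝ) ≤ J.card + (Bad y).card := by
        exact_mod_cast h2
      have := hβ y hy hyJ
      linarith
  refine (sum_le_sum h1).trans ?_
  rw [sum_add_distrib, ← sum_filter, sum_const, sum_const, nsmul_eq_mul, nsmul_eq_mul]
  have : ((V.filter (· ∈ J)).card : ℝ) ≤ J.card := by
    exact_mod_cast card_le_card (fun z hz => (mem_filter.1 hz).2)
  nlinarith [(Nat.cast_nonneg V.card : (0 : ℝ) ≤ V.card)]

lemma exists_not_filter {A : Finset ℕ} (p : ℕ → Prop) [DecidablePred p]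
    {a : ℝ} (h : ((A.filter fun q => ¬ p q).card : ℝ) ≤ a) (h2 : a < A.card) : ∃ q ∈ A, p q := by
  obtain ⟨q, hq, hq'⟩ : ∃ q ∈ A, q ∉ A.filter fun q => ¬ p q := by
    apply exists_mem_notMem_of_card_lt_card
    exact_mod_cast h.trans_lt h2
  refine ⟨q, hq, ?_⟩
  by_contra hc
  exact hq' (mem_filter.2 ⟨hq, hc⟩)

lemma card_filter_two {A : Finset ℕ} (p p' : ℕ → Prop) [DecidablePred p] [DecidablePred p']
    {a : ℝ} (h : ((A.filter fun q => ¬ p q).card : ℝ) ≤ a)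
    (h' : ((A.filter fun q => ¬ p' q).card : ℝ) ≤ a) :
    (A.card : ℝ) - 2 * a ≤ (A.filter fun q => p q ∧ p' q).card := by
  have hs : A ⊆ (A.filter fun q => p q ∧ p' q) ∪ (A.filter fun q => ¬ p q) ∪
      (A.filter fun q => ¬ p' q) := by
    intro q hq
    simp only [mem_union, mem_filter, hq, true_and]
    tauto
  have c := card_le_card hs
  have c1 := card_union_le ((A.filter fun q => p q ∧ p' q) ∪ (A.filter fun q => ¬ p q))
    (A.filter fun q => ¬ p' q)
  have c2 := card_union_le (A.filter fun q => p q ∧ p' q) (A.filter fun q => ¬ p q)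
  have : (A.card : ℝ) ≤ (A.filter fun q => p q ∧ p' q).card + (A.filter fun q => ¬ p q).card
    + (A.filter fun q => ¬ p' q).card := by
    exact_mod_cast c.trans (c1.trans (by omega))
  linarith

lemma compl_of_disj {a b : Finset (Fin 4)} (h : a ∩ b = ∅) (ha : a.card = 2) (hb : b.card = 2) :
    a = bᶜ := by
  apply eq_of_subset_of_card_le
  · intro i hi
    rw [mem_compl]
    intro hb'
    have := mem_inter.2 ⟨hi, hb'⟩
    rw [h] at this
    simp at this
  · rw [card_compl, hb, ha]; simp

set_option maxHeartbeats 4000000 in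
/-- link structure of a `K4` -/
lemma links (hE : Good E) (hs : K4 E s) {V : Finset ℕ} {δ : ℝ} (hδ0 : 0 < δ) (hδ : δ ≤ 1 / 10000)
    (hn : 4 ≤ δ * V.card) (hV : (3 - δ ^ 2) * (V.card : ℝ) ^ 2 ≤ ft E s V) :
    ∃ A ⊆ V, (1 / 2 - 65 * δ) * V.card ≤ A.card ∧ (1 / 2 - 65 * δ) * V.card ≤ (V \ A).card ∧
      (∀ i, (err E V A (s i) : ℝ) ≤ 400 * δ * (V.card : ℝ) ^ 2 ∨
        (err E V (V \ A) (s i) : ℝ) ≤ 400 * δ * (V.card : ℝ) ^ 2) ∧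
      (∃ i, (err E V A (s i) : ℝ) ≤ 400 * δ * (V.card : ℝ) ^ 2) ∧
      (∃ i, (err E V (V \ A) (s i) : ℝ) ≤ 400 * δ * (V.card : ℝ) ^ 2) := by
  classical
  obtain ⟨U, hUV, hUne, hUc, hm⟩ := clean hE hs hδ0 hδ hn hV
  obtain ⟨A, hA, B, hB, hAB, cA, cB, dA, dB⟩ := struct hE hs (by linarith) (by linarith) hUne hm
  have hUcard : (U.card : ℝ) ≤ V.card := by exact_mod_cast card_le_card hUV
  have hup : (0 : ℝ) < U.card := by exact_mod_cast card_pos.2 hUne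
  have hδu : 0 < δ * U.card := by positivity
  have hδU : δ * U.card ≤ δ * V.card := mul_le_mul_of_nonneg_left hUcard hδ0.le
  have hδk : δ * U.card ≤ 1 / 10000 * U.card := mul_le_mul_of_nonneg_right hδ hup.le
  obtain ⟨v, hv⟩ : B.Nonempty := by
    rw [← card_pos]
    have : (0 : ℝ) < B.card := by linarith
    exact_mod_cast this
  obtain ⟨v', hv', hvv⟩ := exists_not_filter _ (dB v hv).1 (by linarith)
  have cA' := card_filter_two _ _ (dB v hv).2 (dB v' hv').2
  set A' := A.filter fun q => w E s v q = 4 ∧ w E s v' q = 4 with hA'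
  have hA'A : A' ⊆ A := filter_subset _ _
  obtain ⟨a, ha⟩ : A'.Nonempty := by
    rw [← card_pos]
    have : (0 : ℝ) < A'.card := by linarith
    exact_mod_cast this
  obtain ⟨a', ha', haa⟩ := exists_not_filter (A := A') (fun q => w E s a q = 2)
    (a := 13 * (2 * δ) * U.card)
    (le_trans (by exact_mod_cast card_le_card (filter_subset_filter _ hA'A)) (dA a (hA'A ha)).1)
    (by linarith)
  have cB' := card_filter_two _ _ (dA a (hA'A ha)).2 (dA a' (hA'A ha')).2
  set B' := B.filter fun q => w E s a q = 4 ∧ w E s a' q = 4 with hB'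
  have hB'B : B' ⊆ B := filter_subset _ _
  have hA'B' : Disjoint A' B' := disjoint_of_subset_left hA'A (disjoint_of_subset_right hB'B hAB)
  set P := (C E s v v')ᶜ with hP
  have colA : ∀ q ∈ A', ∀ q' ∈ A', w E s q q' = 2 → C E s q q' = P := by
    intro q hq q' hq' hw
    rw [hA', mem_filter] at hq hq'
    refine compl_of_disj (opp_disj hE hs (x := q) (y := q') (z := v) (u := v') ?_ ?_ ?_ ?_) hw hvv
    · rw [w_comm hE]; exact hq.2.1
    · rw [w_comm hE]; exact hq'.2.2
    · rw [w_comm hE]; exact hq.2.2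
    · rw [w_comm hE]; exact hq'.2.1
  have hPa : C E s a a' = P := colA a ha a' ha' haa
  have colB : ∀ q ∈ B', ∀ q' ∈ B', w E s q q' = 2 → C E s q q' = Pᶜ := by
    intro q hq q' hq' hw
    rw [hB', mem_filter] at hq hq'
    rw [← hPa]
    refine compl_of_disj (opp_disj hE hs (x := q) (y := q') (z := a) (u := a') ?_ ?_ ?_ ?_) hw haa
    · rw [w_comm hE]; exact hq.2.1
    · rw [w_comm hE]; exact hq'.2.2
    · rw [w_comm hE]; exact hq.2.2
    · rw [w_comm hE]; exact hq'.2.1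
  set J := V \ (A' ∪ B') with hJ
  have hA'V : A' ⊆ V := (hA'A.trans hA).trans hUV
  have hB'V : B' ⊆ V := (hB'B.trans hB).trans hUV
  have cJ : (J.card : ℝ) = V.card - A'.card - B'.card := by
    rw [hJ, card_sdiff_of_subset (union_subset hA'V hB'V), card_union_of_disjoint hA'B',
      Nat.cast_sub]
    · push_cast; ring
    · rw [← card_union_of_disjoint hA'B']; exact card_le_card (union_subset hA'V hB'V)
  have sA : (1 / 2 - 65 * δ) * V.card ≤ A'.card := by linarith
  have sB : (1 / 2 - 65 * δ) * V.card ≤ B'.card := by linarith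
  have hJb : (J.card : ℝ) ≤ 130 * δ * V.card := by linarith
  let Bad : ℕ → Finset ℕ := fun y => if y ∈ A then
      (A.filter fun q => w E s y q ≠ 2) ∪ (B.filter fun q => w E s y q ≠ 4) else
      (B.filter fun q => w E s y q ≠ 2) ∪ (A.filter fun q => w E s y q ≠ 4)
  have notJ : ∀ y ∈ V, y ∉ J → y ∈ A' ∨ y ∈ B' := by
    intro y hy hyJ
    by_contra hc
    exact hyJ (mem_sdiff.2 ⟨hy, by rwa [mem_union]⟩)
  have hBad : ∀ y ∈ V, y ∉ J → ((Bad y).card : ℝ) ≤ 52 * δ * V.card := by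
    intro y hy hyJ
    rcases notJ y hy hyJ with h | h
    · have h1 := dA y (hA'A h)
      simp only [Bad, if_pos (hA'A h)]
      have := card_union_le (A.filter fun q => w E s y q ≠ 2) (B.filter fun q => w E s y q ≠ 4)
      have this' : (((A.filter fun q => w E s y q ≠ 2) ∪
          (B.filter fun q => w E s y q ≠ 4)).card : ℝ) ≤
          (A.filter fun q => w E s y q ≠ 2).card + (B.filter fun q => w E s y q ≠ 4).card := by
        exact_mod_cast this
      linarith
    · have h1 := dB y (hB'B h)
      have hnA : y ∉ A := fun h' => disjoint_left.1 hAB h' (hB'B h)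
      simp only [Bad, if_neg hnA]
      have := card_union_le (B.filter fun q => w E s y q ≠ 2) (A.filter fun q => w E s y q ≠ 4)
      have this' : (((B.filter fun q => w E s y q ≠ 2) ∪
          (A.filter fun q => w E s y q ≠ 4)).card : ℝ) ≤
          (B.filter fun q => w E s y q ≠ 2).card + (A.filter fun q => w E s y q ≠ 4).card := by
        exact_mod_cast this
      linarith
  -- the pointwise description
  have desc : ∀ y ∈ V, y ∉ J → ∀ z ∈ V, z ∉ J → z ∉ Bad y →
      (y ∈ A' ∧ z ∈ A' ∧ C E s y z = P) ∨ (y ∈ B' ∧ z ∈ B' ∧ C E s y z = Pᶜ) ∨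
      (y ∈ A' ∧ z ∈ B' ∧ C E s y z = univ) ∨ (y ∈ B' ∧ z ∈ A' ∧ C E s y z = univ) := by
    intro y hy hyJ z hz hzJ hzb
    rcases notJ y hy hyJ with h | h
    · simp only [Bad, if_pos (hA'A h), mem_union, mem_filter, not_or, not_and, not_not] at hzb
      rcases notJ z hz hzJ with h' | h'
      · exact Or.inl ⟨h, h', colA y h z h' (hzb.1 (hA'A h'))⟩
      · exact Or.inr (Or.inr (Or.inl ⟨h, h', eq_univ_of_w (hzb.2 (hB'B h'))⟩))
    · have hnA : y ∉ A := fun h' => disjoint_left.1 hAB h' (hB'B h)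
      simp only [Bad, if_neg hnA, mem_union, mem_filter, not_or, not_and, not_not] at hzb
      rcases notJ z hz hzJ with h' | h'
      · exact Or.inr (Or.inr (Or.inr ⟨h, h', eq_univ_of_w (hzb.2 (hA'A h'))⟩))
      · exact Or.inr (Or.inl ⟨h, h', colB y h z h' (hzb.1 (hB'B h'))⟩)
  have hnn : (0 : ℝ) ≤ V.card := by positivity
  have fin : (J.card : ℝ) * V.card + V.card * (J.card + 52 * δ * V.card) ≤
      400 * δ * (V.card : ℝ) ^ 2 := by
    nlinarith [mul_le_mul_of_nonneg_right hJb hnn, mul_nonneg hδ0.le (sq_nonneg (V.card : ℝ))]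
  have t1 : ∀ i, i ∉ P → (err E V A' (s i) : ℝ) ≤ 400 * δ * (V.card : ℝ) ^ 2 := by
    intro i hi
    refine le_trans (sum_bad_le (fun y z => (E (s i) y z ↔ ¬ (y ∈ A' ∧ z ∈ A'))) sdiff_subset Bad
      (52 * δ * V.card) (by positivity) hBad ?_) fin
    intro y hy hyJ z hz hzJ hzb
    rw [← mem_C (E := E) (s := s)]
    have dj : ∀ q, q ∈ A' → q ∉ B' := fun q h1 h2 => disjoint_left.1 hA'B' h1 h2
    rcases desc y hy hyJ z hz hzJ hzb with h | h | h | h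
    · simp [h.1, h.2.1, h.2.2, hi]
    · have : y ∉ A' := fun h' => dj y h' h.1
      simp [h.2.2, hi, this]
    · have : z ∉ A' := fun h' => dj z h' h.2.1
      simp [h.2.2, this]
    · have : y ∉ A' := fun h' => dj y h' h.1
      simp [h.2.2, this]
  have t2 : ∀ i, i ∈ P → (err E V (V \ A') (s i) : ℝ) ≤ 400 * δ * (V.card : ℝ) ^ 2 := by
    intro i hi
    refine le_trans (sum_bad_le (fun y z => (E (s i) y z ↔ ¬ (y ∈ V \ A' ∧ z ∈ V \ A')))
      sdiff_subset Bad (52 * δ * V.card) (by positivity) hBad ?_) fin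
    intro y hy hyJ z hz hzJ hzb
    rw [← mem_C (E := E) (s := s)]
    have dj : ∀ q, q ∈ A' → q ∉ B' := fun q h1 h2 => disjoint_left.1 hA'B' h1 h2
    rcases desc y hy hyJ z hz hzJ hzb with h | h | h | h
    · simp [h.1, h.2.2, hi]
    · have h1 : y ∉ A' := fun h' => dj y h' h.1
      have h2 : z ∉ A' := fun h' => dj z h' h.2.1
      simp [h.2.2, hi, hy, hz, h1, h2]
    · simp [h.2.2, h.1]
    · simp [h.2.2, h.2.1]
  have hcP : P.card = 2 := by
    rw [hP, card_compl, show (C E s v v').card = 2 from hvv]; simp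
  refine ⟨A', hA'V, sA, sB.trans ?_, ?_, ?_, ?_⟩
  · have : B' ⊆ V \ A' := fun q hq => mem_sdiff.2 ⟨hB'V hq, fun h' => disjoint_left.1 hA'B' h' hq⟩
    exact_mod_cast card_le_card this
  · intro i
    by_cases hi : i ∈ P
    · exact Or.inr (t2 i hi)
    · exact Or.inl (t1 i hi)
  · obtain ⟨i, hi⟩ : ∃ i, i ∉ P := by
      by_contra! h
      rw [eq_univ_of_forall h] at hcP
      simp at hcP
    exact ⟨i, t1 i hi⟩
  · obtain ⟨i, hi⟩ : P.Nonempty := by rw [← card_pos]; omega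
    exact ⟨i, t2 i hi⟩

end

section
variable {E : ℕ → ℕ → ℕ → Prop} {s : Fin 4 → ℕ}

open Classical in
lemma cast_dsum (V : Finset ℕ) (P : ℕ → ℕ → Prop) :
    ((∑ y ∈ V, (V.filter fun z => P y z).card : ℕ) : ℝ) =
      ∑ y ∈ V, ∑ z ∈ V, (if P y z then (1 : ℝ) else 0) := by
  push_cast
  refine sum_congr rfl fun y _ => ?_
  rw [card_filter]; push_cast; rfl

open Classical in
lemma cast_dg (V : Finset ℕ) (x : ℕ) :
    (dg E V x : ℝ) = ∑ y ∈ V, ∑ z ∈ V, (if E x y z then (1 : ℝ) else 0) :=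
  cast_dsum V fun y z => E x y z

open Classical in
lemma cast_err (V A : Finset ℕ) (x : ℕ) :
    (err E V A x : ℝ) =
      ∑ y ∈ V, ∑ z ∈ V, (if ¬ (E x y z ↔ ¬ (y ∈ A ∧ z ∈ A)) then (1 : ℝ) else 0) := by
  unfold err
  push_cast
  refine sum_congr rfl fun y _ => ?_
  rw [card_filter]; push_cast
  refine sum_congr rfl fun z _ => ?_
  congr

/-- existence of a K4 through a given vertex -/
lemma exists_k4 (hE : Good E) {V J : Finset ℕ} {ε : ℝ} (hε : ε ≤ 1 / 1000) (hV : V.Nonempty)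
    (hJ : (J.card : ℝ) ≤ V.card / 100) {x : ℕ} (hx : (3 / 4 - ε) * (V.card : ℝ) ^ 2 ≤ dg E V x)
    (hd : ∀ y ∈ V, (3 / 4 - ε) * (V.card : ℝ) ^ 2 ≤ dg E V y) :
    ∃ y ∈ V, ∃ z ∈ V, ∃ q ∈ V, q ∉ J ∧ E x y z ∧ E x y q ∧ E x z q ∧ E y z q := by
  classical
  by_contra! hc
  set I : ℕ → ℕ → ℝ := fun y z => if E x y z then 1 else 0 with hI
  have hn0 : (0 : ℝ) < V.card := by exact_mod_cast card_pos.2 hV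
  set n : ℝ := (V.card : ℝ) with hn
  set D : ℝ := ∑ y ∈ V, ∑ z ∈ V, I y z with hD
  have hDd : (dg E V x : ℝ) = D := cast_dg V x
  have Isymm : ∀ y z, I y z = I z y := by
    intro y z
    simp only [hI]
    have : E x y z ↔ E x z y := ⟨hE.s23 _ _ _, hE.s23 _ _ _⟩
    simp only [this]
  have pt : ∀ y ∈ V, ∀ z ∈ V, ∀ q ∈ V, I y z * I y q + I y z * I z q - I y z +
      (if E y z q then (1 : ℝ) else 0) ≤ 1 + (if q ∈ J then 1 else 0) := by
    intro y hy z hz q hq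
    have hh := hc y hy z hz q hq
    clear_value D
    clear hx hd hDd Isymm hD
    simp only [hI]
    by_cases h1 : E x y z <;> by_cases h2 : E x y q <;> by_cases h3 : E x z q <;>
      by_cases h4 : E y z q <;> by_cases h5 : q ∈ J <;>
      simp only [h1, h2, h3, h4, h5, if_true, if_false] <;> norm_num <;> simp_all
  have S := sum_le_sum fun y hy => sum_le_sum fun z hz => sum_le_sum (pt y hy z hz)
  simp only [sum_add_distrib, sum_sub_distrib, sum_const, nsmul_eq_mul, mul_one] at S
  have e1 : ∑ y ∈ V, ∑ z ∈ V, ∑ q ∈ V, I y z * I y q = ∑ y ∈ V, (∑ z ∈ V, I y z) ^ 2 := by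
    refine sum_congr rfl fun y _ => ?_
    rw [sq, sum_mul_sum]
  have e2 : ∑ y ∈ V, ∑ z ∈ V, ∑ q ∈ V, I y z * I z q = ∑ y ∈ V, (∑ z ∈ V, I y z) ^ 2 := by
    rw [sum_comm]
    refine sum_congr rfl fun y _ => ?_
    rw [sq, sum_mul_sum]
    exact sum_congr rfl fun z _ => sum_congr rfl fun q _ => by rw [Isymm z y]
  have e3 : ∑ y ∈ V, ∑ z ∈ V, n * I y z = n * D := by
    simp only [← mul_sum]; rfl
  have e4 : n * ((3 / 4 - ε) * n ^ 2) ≤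
      ∑ y ∈ V, ∑ z ∈ V, ∑ q ∈ V, (if E y z q then (1 : ℝ) else 0) := by
    have := sum_le_sum hd
    rw [sum_const, nsmul_eq_mul] at this
    refine this.trans (le_of_eq ?_)
    exact sum_congr rfl fun y _ => cast_dg V y
  have e5 : ∑ q ∈ V, (if q ∈ J then (1 : ℝ) else 0) ≤ n / 100 := by
    rw [← sum_filter, sum_const, nsmul_eq_mul, mul_one]
    refine le_trans ?_ hJ
    exact_mod_cast card_le_card (fun z hz => (mem_filter.1 hz).2)
  have e6 : 3 / 2 * n * D - n * (9 / 16 * n ^ 2) ≤ ∑ y ∈ V, (∑ z ∈ V, I y z) ^ 2 := by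
    have : ∀ y ∈ V, 3 / 2 * n * (∑ z ∈ V, I y z) - 9 / 16 * n ^ 2 ≤ (∑ z ∈ V, I y z) ^ 2 := by
      intro y _
      nlinarith [sq_nonneg (∑ z ∈ V, I y z - 3 / 4 * n)]
    have := sum_le_sum this
    rw [sum_sub_distrib, ← mul_sum, sum_const, nsmul_eq_mul] at this
    exact this
  rw [e1, e2, e3] at S
  rw [hDd] at hx
  have e7 : n * (n * ∑ q ∈ V, (if q ∈ J then (1 : ℝ) else 0)) ≤ n * (n * (n / 100)) := by gcongr
  have e8 : n * ((3 / 4 - ε) * n ^ 2) ≤ n * D := by gcongr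
  have e9 : 0 < n ^ 3 := by positivity
  have e10 : ε * n ^ 3 ≤ 1 / 1000 * n ^ 3 := by gcongr
  nlinarith

lemma k4_of (hE : Good E) {a b c d : ℕ} (h1 : E a b c) (h2 : E a b d) (h3 : E a c d)
    (h4 : E b c d) : K4 E ![a, b, c, d] := by
  have p1 := fun x y z => hE.s12 x y z
  have p2 := fun x y z => hE.s23 x y z
  intro i j k hij hik hjk
  fin_cases i <;> fin_cases j <;> simp at hij <;> fin_cases k <;> simp at hik hjk <;>
    simp <;> grind

/-- the symmetric difference of two approximate types of the same vertex -/
lemma sdiff_small {V A A' : Finset ℕ} (hA : A ⊆ V) {x : ℕ} {κ κ' : ℝ}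
    (h : (err E V A x : ℝ) ≤ κ * (V.card : ℝ) ^ 2) (h' : (err E V A' x : ℝ) ≤ κ' * (V.card : ℝ) ^ 2)
    (hc : (V.card : ℝ) / 3 ≤ A.card) (hV : V.Nonempty) :
    ((A \ A').card : ℝ) ≤ 3 * (κ + κ') * V.card := by
  classical
  have hn0 : (0 : ℝ) < V.card := by exact_mod_cast card_pos.2 hV
  have pt : ∀ y ∈ V, ∀ z ∈ V, (if y ∈ A \ A' then (1 : ℝ) else 0) * (if z ∈ A then 1 else 0) ≤
      (if ¬ (E x y z ↔ ¬ (y ∈ A ∧ z ∈ A)) then (1 : ℝ) else 0) +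
      (if ¬ (E x y z ↔ ¬ (y ∈ A' ∧ z ∈ A')) then (1 : ℝ) else 0) := by
    intro y _ z _
    by_cases h1 : y ∈ A <;> by_cases h2 : y ∈ A' <;> by_cases h3 : z ∈ A <;>
      by_cases h4 : z ∈ A' <;> by_cases h5 : E x y z <;> simp [h1, h2, h3, h4, h5]
  have S := sum_le_sum fun y hy => sum_le_sum (pt y hy)
  simp only [sum_add_distrib] at S
  rw [← cast_err, ← cast_err] at S
  simp only [← mul_sum, ← sum_mul] at S
  have c1 : ∑ y ∈ V, (if y ∈ A \ A' then (1 : ℝ) else 0) = (A \ A').card := by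
    rw [← sum_filter, sum_const, nsmul_eq_mul, mul_one, filter_mem_eq_inter,
      inter_eq_right.2 (sdiff_subset.trans hA)]
  have c2 : ∑ y ∈ V, (if y ∈ A then (1 : ℝ) else 0) = A.card := by
    rw [← sum_filter, sum_const, nsmul_eq_mul, mul_one, filter_mem_eq_inter,
      inter_eq_right.2 hA]
  rw [c1, c2] at S
  have : ((A \ A').card : ℝ) * (V.card / 3) ≤ (κ + κ') * V.card * V.card := by
    have := mul_le_mul_of_nonneg_left hc (Nat.cast_nonneg (A \ A').card : (0 : ℝ) ≤ _)
    nlinarith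
  have h3 : ((A \ A').card : ℝ) * V.card ≤ (3 * (κ + κ') * V.card) * V.card := by linarith
  exact le_of_mul_le_mul_right h3 hn0

lemma err_change {V A A' : Finset ℕ} (x : ℕ) :
    (err E V A' x : ℝ) ≤ err E V A x + 2 * V.card * ((A \ A').card + (A' \ A).card) := by
  classical
  have pt : ∀ y ∈ V, ∀ z ∈ V, (if ¬ (E x y z ↔ ¬ (y ∈ A' ∧ z ∈ A')) then (1 : ℝ) else 0) ≤
      (if ¬ (E x y z ↔ ¬ (y ∈ A ∧ z ∈ A)) then (1 : ℝ) else 0) +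
      ((if y ∈ A \ A' then (1 : ℝ) else 0) + (if y ∈ A' \ A then (1 : ℝ) else 0)) +
      ((if z ∈ A \ A' then (1 : ℝ) else 0) + (if z ∈ A' \ A then (1 : ℝ) else 0)) := by
    intro y _ z _
    by_cases h1 : y ∈ A <;> by_cases h2 : y ∈ A' <;> by_cases h3 : z ∈ A <;>
      by_cases h4 : z ∈ A' <;> by_cases h5 : E x y z <;> norm_num [h1, h2, h3, h4, h5]
  have S := sum_le_sum fun y hy => sum_le_sum (pt y hy)
  simp only [sum_add_distrib, sum_const, nsmul_eq_mul] at S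
  rw [← cast_err, ← cast_err] at S
  simp only [← mul_sum] at S
  have c : ∀ X : Finset ℕ, ∑ y ∈ V, (if y ∈ X then (1 : ℝ) else 0) ≤ X.card := by
    intro X
    rw [← sum_filter, sum_const, nsmul_eq_mul, mul_one]
    exact_mod_cast card_le_card (fun z hz => (mem_filter.1 hz).2)
  have c1 := mul_le_mul_of_nonneg_left (c (A \ A')) (Nat.cast_nonneg V.card : (0 : ℝ) ≤ _)
  have c2 := mul_le_mul_of_nonneg_left (c (A' \ A)) (Nat.cast_nonneg V.card : (0 : ℝ) ≤ _)
  linarith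

/-- transfer of a type from one to another vertex of the same `K4`; first version -/
lemma transfer' {V A A' : Finset ℕ} (hA : A ⊆ V) (hA' : A' ⊆ V) {x : ℕ} {κ κ' : ℝ}
    (h : (err E V A x : ℝ) ≤ κ * (V.card : ℝ) ^ 2) (h' : (err E V A' x : ℝ) ≤ κ' * (V.card : ℝ) ^ 2)
    (hc : (V.card : ℝ) / 3 ≤ A.card) (hc' : (V.card : ℝ) / 3 ≤ A'.card) (hV : V.Nonempty)
    {y : ℕ} (hy : (err E V A' y : ℝ) ≤ κ' * (V.card : ℝ) ^ 2 ∨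
      (err E V (V \ A') y : ℝ) ≤ κ' * (V.card : ℝ) ^ 2) :
    (err E V A y : ℝ) ≤ (κ' + 12 * (κ + κ')) * (V.card : ℝ) ^ 2 ∨
      (err E V (V \ A) y : ℝ) ≤ (κ' + 12 * (κ + κ')) * (V.card : ℝ) ^ 2 := by
  have d1 := sdiff_small hA h h' hc hV
  have d2 := sdiff_small hA' h' h hc' hV
  have hn0 : (0 : ℝ) < V.card := by exact_mod_cast card_pos.2 hV
  have h1 := mul_le_mul_of_nonneg_left (add_le_add d1 d2) (Nat.cast_nonneg V.card : (0 : ℝ) ≤ _)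
  rcases hy with hy | hy
  · left
    have := err_change (E := E) (V := V) (A := A') (A' := A) y
    nlinarith
  · right
    have := err_change (E := E) (V := V) (A := V \ A') (A' := V \ A) y
    have s1 : (V \ A') \ (V \ A) = A \ A' := by
      ext q; simp only [Finset.mem_sdiff]; have := @hA q; tauto
    have s2 : (V \ A) \ (V \ A') = A' \ A := by
      ext q; simp only [Finset.mem_sdiff]; have := @hA' q; tauto
    rw [s1, s2] at this
    nlinarith

lemma transfer (hE : Good E) (hs : K4 E s) {V A : Finset ℕ} {δ κ κ' : ℝ} (hδ0 : 0 < δ)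
    (hδ : δ ≤ 1 / 10000)
    (hn : 4 ≤ δ * V.card) (hV : (3 - δ ^ 2) * (V.card : ℝ) ^ 2 ≤ ft E s V) (hA : A ⊆ V)
    (hc : (V.card : ℝ) / 3 ≤ A.card) (hc' : (V.card : ℝ) / 3 ≤ (V \ A).card)
    (i : Fin 4) (h : (err E V A (s i) : ℝ) ≤ κ * (V.card : ℝ) ^ 2 ∨
      (err E V (V \ A) (s i) : ℝ) ≤ κ * (V.card : ℝ) ^ 2)
    (hκ : κ' = 400 * δ + 12 * (κ + 400 * δ)) (j : Fin 4) :
    (err E V A (s j) : ℝ) ≤ κ' * (V.card : ℝ) ^ 2 ∨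
      (err E V (V \ A) (s j) : ℝ) ≤ κ' * (V.card : ℝ) ^ 2 := by
  subst hκ
  have hV0 : V.Nonempty := by
    rw [← card_pos]
    by_contra h
    have : V.card = 0 := by omega
    rw [this] at hn; norm_num at hn
  have hn0 : (0 : ℝ) < V.card := by exact_mod_cast card_pos.2 hV0
  obtain ⟨A', hA', c1, c2, ty, -, -⟩ := links hE hs hδ0 hδ hn hV
  have hk : δ * V.card ≤ 1 / 10000 * V.card := mul_le_mul_of_nonneg_right hδ hn0.le
  have c1' : (V.card : ℝ) / 3 ≤ A'.card := by linarith
  have c2' : (V.card : ℝ) / 3 ≤ (V \ A').card := by linarith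
  have dd : ∀ X : Finset ℕ, X ⊆ V → V \ (V \ X) = X := fun X hX => by
    rw [Finset.sdiff_sdiff_eq_self hX]
  rcases h with h | h <;> rcases ty i with h' | h'
  · exact transfer' hA hA' h h' hc c1' hV0 (ty j)
  · exact transfer' hA sdiff_subset h h' hc c2' hV0 (by rw [dd _ hA']; exact (ty j).symm)
  · have := transfer' sdiff_subset hA' h h' hc' c1' hV0 (ty j)
    rw [dd _ hA] at this
    exact this.symm
  · have := transfer' sdiff_subset sdiff_subset h h' hc' c2' hV0 (y := s j)
      (by rw [dd _ hA']; exact (ty j).symm)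
    rw [dd _ hA] at this
    exact this.symm

end

section
variable {E : ℕ → ℕ → ℕ → Prop}

open Classical in
lemma pick4 {B : Finset ℕ} (f : Fin 6 → ℕ → ℕ → Prop) {M : ℝ}
    (hf : ∀ i, ((∑ y ∈ B, (B.filter fun z => ¬ f i y z).card : ℕ) : ℝ) ≤ M)
    (hM : 6 * M < (B.card : ℝ) ^ 2) :
    ∃ a b c d, f 0 a b ∧ f 1 c d ∧ f 2 a c ∧ f 3 b d ∧ f 4 a d ∧ f 5 b c := by
  by_contra! hc
  set g : Fin 6 → ℕ → ℕ → ℝ := fun i y z => if ¬ f i y z then 1 else 0 with hg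
  have hg0 : ∀ i, ∑ y ∈ B, ∑ z ∈ B, g i y z ≤ M := by
    intro i
    refine le_trans (le_of_eq ?_) (hf i)
    push_cast
    refine sum_congr rfl fun y _ => ?_
    rw [card_filter]; push_cast
    rfl
  have pt : ∀ a b c d, (1 : ℝ) ≤ g 0 a b + g 1 c d + g 2 a c + g 3 b d + g 4 a d + g 5 b c := by
    intro a b c d
    have hh := hc a b c d
    have nn : ∀ i y z, 0 ≤ g i y z := by
      intro i y z; simp only [hg]; split_ifs <;> norm_num
    have one : ∀ i y z, ¬ f i y z → g i y z = 1 := by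
      intro i y z h; simp only [hg, if_pos h]
    by_cases h0 : f 0 a b
    · by_cases h1 : f 1 c d
      · by_cases h2 : f 2 a c
        · by_cases h3 : f 3 b d
          · by_cases h4 : f 4 a d
            · have := one _ _ _ (hh h0 h1 h2 h3 h4)
              linarith [nn 0 a b, nn 1 c d, nn 2 a c, nn 3 b d, nn 4 a d]
            · have := one _ _ _ h4
              linarith [nn 0 a b, nn 1 c d, nn 2 a c, nn 3 b d, nn 5 b c]
          · have := one _ _ _ h3
            linarith [nn 0 a b, nn 1 c d, nn 2 a c, nn 4 a d, nn 5 b c]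
        · have := one _ _ _ h2
          linarith [nn 0 a b, nn 1 c d, nn 3 b d, nn 4 a d, nn 5 b c]
      · have := one _ _ _ h1
        linarith [nn 0 a b, nn 2 a c, nn 3 b d, nn 4 a d, nn 5 b c]
    · have := one _ _ _ h0
      linarith [nn 1 c d, nn 2 a c, nn 3 b d, nn 4 a d, nn 5 b c]
  have S := sum_le_sum fun a (_ : a ∈ B) => sum_le_sum fun b (_ : b ∈ B) =>
    sum_le_sum fun c (_ : c ∈ B) => sum_le_sum fun d (_ : d ∈ B) => pt a b c d
  simp only [sum_add_distrib, sum_const, nsmul_eq_mul, mul_one, ← mul_sum] at S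
  set n : ℝ := (B.card : ℝ)
  have hn : 0 ≤ n := Nat.cast_nonneg _
  have h := fun i => mul_le_mul_of_nonneg_left (hg0 i) (mul_nonneg hn hn)
  have hM' : 0 ≤ n * n * (n ^ 2 - 6 * M) := by
    have : 0 ≤ n ^ 2 - 6 * M := by linarith
    positivity
  have hn1 : 0 < n := by
    by_contra hneg
    have h0 : n = 0 := le_antisymm (not_lt.1 hneg) hn
    have hB : B = ∅ := by
      have : (B.card : ℝ) = 0 := h0
      exact card_eq_zero.1 (by exact_mod_cast this)
    have := hg0 0
    rw [hB] at this
    simp only [sum_empty] at this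
    rw [h0] at hM
    linarith
  have hM'' : 0 < n * n * (n ^ 2 - 6 * M) := by
    have : 0 < n ^ 2 - 6 * M := by linarith
    positivity
  nlinarith [h 0, h 1, h 2, h 3, h 4, h 5]

/-- no edge within three vertices of the same type -/
lemma no_inner (hE : Good E) {V A : Finset ℕ} {κ : ℝ} (hκ : κ ≤ 1 / 100)
    (hV : V.Nonempty)
    (hc : (V.card : ℝ) / 3 ≤ (V \ A).card) {x y z : ℕ}
    (hx : (err E V A x : ℝ) ≤ κ * (V.card : ℝ) ^ 2) (hy : (err E V A y : ℝ) ≤ κ * (V.card : ℝ) ^ 2)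
    (hz : (err E V A z : ℝ) ≤ κ * (V.card : ℝ) ^ 2) : ¬ E x y z := by
  classical
  intro h
  have hn0 : (0 : ℝ) < V.card := by exact_mod_cast card_pos.2 hV
  have key : ∀ u, (err E V A u : ℝ) ≤ κ * (V.card : ℝ) ^ 2 →
      ((∑ p ∈ V \ A, ((V \ A).filter fun q => ¬ E u p q).card : ℕ) : ℝ) ≤
        κ * (V.card : ℝ) ^ 2 := by
    intro u hu
    refine le_trans ?_ hu
    unfold err
    norm_cast
    refine (sum_le_sum fun p hp => ?_).trans (sum_le_sum_of_subset sdiff_subset)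
    apply card_le_card
    intro q hq
    simp only [mem_filter, Finset.mem_sdiff] at hq hp ⊢
    refine ⟨hq.1.1, fun hh => hq.2 (hh.2 fun h' => hp.2 h'.1)⟩
  obtain ⟨a, b, c, d, h0, h1, h2, h3, h4, h5⟩ := pick4 (B := V \ A)
    ![E x, E x, E y, E y, E z, E z] (M := κ * (V.card : ℝ) ^ 2)
    (by
      intro i
      fin_cases i
      · exact le_trans (le_of_eq (by congr)) (key x hx)
      · exact le_trans (le_of_eq (by congr)) (key x hx)
      · exact le_trans (le_of_eq (by congr)) (key y hy)
      · exact le_trans (le_of_eq (by congr)) (key y hy)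
      · exact le_trans (le_of_eq (by congr)) (key z hz)
      · exact le_trans (le_of_eq (by congr)) (key z hz))
    (by
      have h1 : ((V.card : ℝ) / 3) ^ 2 ≤ ((V \ A).card : ℝ) ^ 2 := by gcongr
      have h2 : κ * (V.card : ℝ) ^ 2 ≤ 1 / 100 * (V.card : ℝ) ^ 2 := by gcongr
      have h3 : 0 < (V.card : ℝ) ^ 2 := by positivity
      nlinarith)
  exact hE.ff x y z a b c d h h0 h1 h2 h3 h4 h5

/-- step 2: the vertices outside `A` with large codegree with `a` get a `K4` with `a` -/
lemma good_of_codeg {V A : Finset ℕ} {a x : ℕ} {κ ε : ℝ}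
    (hε : ε ≤ 1 / 1000) (hκ : κ ≤ 1 / 1000) (hV : V.Nonempty) (hA : (A.card : ℝ) ≤ 51 / 100 * V.card)
    (ha : (err E V A a : ℝ) ≤ κ * (V.card : ℝ) ^ 2)
    (hx : (3 / 4 - ε) * (V.card : ℝ) ^ 2 ≤ dg E V x)
    (hd : ∀ (_ : DecidablePred fun y => ¬ E a x y),
      ((V.filter fun y => ¬ E a x y).card : ℝ) ≤ V.card / 8) :
    ∃ y ∈ V, ∃ z ∈ V, E a x y ∧ E a x z ∧ E a y z ∧ E x y z := by
  classical
  by_contra! hc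
  have hn0 : (0 : ℝ) < V.card := by exact_mod_cast card_pos.2 hV
  have pt : ∀ y ∈ V, ∀ z ∈ V, (if E x y z then (1 : ℝ) else 0) ≤
      (if ¬ E a x y then (1 : ℝ) else 0) + (if ¬ E a x z then (1 : ℝ) else 0) +
      (if ¬ (E a y z ↔ ¬ (y ∈ A ∧ z ∈ A)) then (1 : ℝ) else 0) +
      (if y ∈ A then (1 : ℝ) else 0) * (if z ∈ A then (1 : ℝ) else 0) := by
    intro y hy z hz
    have hh := hc y hy z hz
    clear ha hx hd hc
    by_cases h1 : y ∈ A <;> by_cases h2 : E a x y <;> by_cases h3 : z ∈ A <;>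
      by_cases h4 : E a x z <;> by_cases h5 : E a y z <;> by_cases h6 : E x y z <;>
      simp only [h1, h2, h3, h4, h5, h6, if_true, if_false] <;> norm_num <;> simp_all
  have S := sum_le_sum fun y hy => sum_le_sum (pt y hy)
  simp only [sum_add_distrib, sum_const, nsmul_eq_mul] at S
  rw [← cast_err, ← cast_dg] at S
  simp only [← mul_sum, ← sum_mul] at S
  have c : ∑ y ∈ V, (if y ∈ A then (1 : ℝ) else 0) ≤ A.card := by
    rw [← sum_filter, sum_const, nsmul_eq_mul, mul_one]
    exact_mod_cast card_le_card (fun z hz => (mem_filter.1 hz).2)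
  have c0 : 0 ≤ ∑ y ∈ V, (if y ∈ A then (1 : ℝ) else 0) :=
    sum_nonneg fun y _ => by split_ifs <;> norm_num
  have c1 : ∑ y ∈ V, (if ¬ E a x y then (1 : ℝ) else 0) ≤ V.card / 8 := by
    rw [← sum_filter, sum_const, nsmul_eq_mul, mul_one]
    exact hd _
  have c2 := mul_le_mul_of_nonneg_left c1 hn0.le
  have c3 : (∑ y ∈ V, (if y ∈ A then (1 : ℝ) else 0)) * (∑ y ∈ V, (if y ∈ A then (1 : ℝ) else 0)) ≤
      (51 / 100 * V.card) * (51 / 100 * V.card) := by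
    have := c.trans hA
    gcongr
  have h2 : κ * (V.card : ℝ) ^ 2 ≤ 1 / 1000 * (V.card : ℝ) ^ 2 := by gcongr
  have h4 : ε * (V.card : ℝ) ^ 2 ≤ 1 / 1000 * (V.card : ℝ) ^ 2 := by gcongr
  have h3 : 0 < (V.card : ℝ) ^ 2 := by positivity
  nlinarith

open Classical in
lemma exc_small {V A : Finset ℕ} {a : ℕ} {κ : ℝ} (hV : V.Nonempty)
    (ha : (err E V A a : ℝ) ≤ κ * (V.card : ℝ) ^ 2) :
    (((V \ A).filter fun x => (V.card : ℝ) / 8 < (V.filter fun y => ¬ E a x y).card).card : ℝ) ≤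
      8 * κ * V.card := by
  have hn0 : (0 : ℝ) < V.card := by exact_mod_cast card_pos.2 hV
  set X := (V \ A).filter fun x => (V.card : ℝ) / 8 < (V.filter fun y => ¬ E a x y).card with hX
  have h1 : ∑ x ∈ X, ((V.card : ℝ) / 8) ≤ ∑ x ∈ X, ((V.filter fun y => ¬ E a x y).card : ℝ) :=
    sum_le_sum fun x hx => (mem_filter.1 hx).2.le
  have h2 : ∑ x ∈ X, ((V.filter fun y => ¬ E a x y).card : ℝ) ≤ err E V A a := by
    unfold err
    norm_cast
    refine (sum_le_sum fun p hp => ?_).trans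
      (sum_le_sum_of_subset ((filter_subset _ _).trans sdiff_subset))
    apply card_le_card
    intro q hq
    simp only [hX, mem_filter, Finset.mem_sdiff] at hq hp ⊢
    refine ⟨hq.1, fun hh => hq.2 (hh.2 fun h' => hp.1.2 h'.1)⟩
  rw [sum_const, nsmul_eq_mul] at h1
  have h3 : (X.card : ℝ) * V.card ≤ (8 * κ * V.card) * V.card := by nlinarith
  exact le_of_mul_le_mul_right h3 hn0

lemma ft_ge {V : Finset ℕ} {s : Fin 4 → ℕ} {ε δ : ℝ} (hεδ : 4 * ε ≤ δ ^ 2)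
    (h : ∀ i, (3 / 4 - ε) * (V.card : ℝ) ^ 2 ≤ dg E V (s i)) :
    (3 - δ ^ 2) * (V.card : ℝ) ^ 2 ≤ ft E s V := by
  rw [ft_eq_dg, Fin.sum_univ_four]
  push_cast
  have h3 : 0 ≤ (V.card : ℝ) ^ 2 := by positivity
  nlinarith [h 0, h 1, h 2, h 3]

/-- degree stability -/
theorem deg_stab (hE : Good E) {V : Finset ℕ} (hN : 400000000 ≤ V.card)
    (hd : ∀ x ∈ V, (3 / 4 - 1 / 10 ^ 17) * (V.card : ℝ) ^ 2 ≤ dg E V x) :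
    ∃ P ⊆ V, (∀ x ∈ P, ∀ y ∈ P, ∀ z ∈ P, ¬ E x y z) ∧
      (∀ x ∈ V \ P, ∀ y ∈ V \ P, ∀ z ∈ V \ P, ¬ E x y z) := by
  classical
  set δ : ℝ := 1 / 10 ^ 8 with hδ
  have hN' : (400000000 : ℝ) ≤ V.card := by exact_mod_cast hN
  have hn0 : (0 : ℝ) < V.card := by linarith
  have hV : V.Nonempty := card_pos.1 (by omega)
  have hδ0 : 0 < δ := by norm_num [hδ]
  have hδ1 : δ ≤ 1 / 10000 := by norm_num [hδ]
  have hn4 : 4 ≤ δ * V.card := by rw [hδ]; linarith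
  have hεδ : 4 * (1 / 10 ^ 17 : ℝ) ≤ δ ^ 2 := by norm_num [hδ]
  have hε : (1 / 10 ^ 17 : ℝ) ≤ 1 / 1000 := by norm_num
  obtain ⟨x0, hx0⟩ := hV
  have hV : V.Nonempty := ⟨x0, hx0⟩
  -- first K4
  obtain ⟨y0, hy0, z0, hz0, q0, hq0, -, e1, e2, e3, e4⟩ :=
    exists_k4 hE (J := ∅) hε hV (by simp; positivity) (hd x0 hx0) hd
  have dgs : ∀ a b c d, a ∈ V → b ∈ V → c ∈ V → d ∈ V → ∀ i,
      (3 / 4 - 1 / 10 ^ 17) * (V.card : ℝ) ^ 2 ≤ dg E V ((![a, b, c, d] : Fin 4 → ℕ) i) := by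
    intro a b c d ha hb hc hd' i
    fin_cases i
    · exact hd a ha
    · exact hd b hb
    · exact hd c hc
    · exact hd d hd'
  have K0 := k4_of hE e1 e2 e3 e4
  have inV : ∀ i, (![x0, y0, z0, q0] : Fin 4 → ℕ) i ∈ V := by
    intro i; fin_cases i
    · exact hx0
    · exact hy0
    · exact hz0
    · exact hq0
  obtain ⟨A, hA, c1, c2, -, ⟨ia, ta⟩, ⟨ic, tc⟩⟩ := links hE K0 hδ0 hδ1 hn4
    (ft_ge hεδ (dgs _ _ _ _ hx0 hy0 hz0 hq0))
  have haV := inV ia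
  have hcV := inV ic
  set a := (![x0, y0, z0, q0] : Fin 4 → ℕ) ia
  set c := (![x0, y0, z0, q0] : Fin 4 → ℕ) ic
  have hsum : (A.card : ℝ) + (V \ A).card = V.card := by
    have := card_sdiff_add_card_eq_card hA
    rw [add_comm]; exact_mod_cast this
  have hk : δ * V.card ≤ 1 / 10000 * V.card := mul_le_mul_of_nonneg_right hδ1 hn0.le
  have dd : V \ (V \ A) = A := Finset.sdiff_sdiff_eq_self hA
  have tA : (V.card : ℝ) / 3 ≤ A.card := by linarith
  have tB : (V.card : ℝ) / 3 ≤ (V \ A).card := by linarith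
  set J := ((V \ A).filter fun x => (V.card : ℝ) / 8 < (V.filter fun y => ¬ E a x y).card) ∪
    ((V \ (V \ A)).filter fun x => (V.card : ℝ) / 8 < (V.filter fun y => ¬ E c x y).card) with hJ
  have cJ : (J.card : ℝ) ≤ V.card / 100 := by
    have h1 := exc_small hV ta
    have h2 := exc_small hV tc
    refine (show (J.card : ℝ) ≤ ((_ : ℕ) + (_ : ℕ) : ℝ) by
      rw [hJ]; exact_mod_cast card_union_le _ _).trans ((add_le_add h1 h2).trans ?_)
    rw [hδ]
    linarith
  -- second step
  have step2 : ∀ x ∈ V, x ∉ J → (err E V A x : ℝ) ≤ (25 * (400 * δ)) * (V.card : ℝ) ^ 2 ∨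
      (err E V (V \ A) x : ℝ) ≤ (25 * (400 * δ)) * (V.card : ℝ) ^ 2 := by
    intro x hx hxJ
    rw [hJ, mem_union, not_or, mem_filter, mem_filter, dd, Finset.mem_sdiff] at hxJ
    by_cases hxA : x ∈ A
    · have h8 : ((V.filter fun y => ¬ E c x y).card : ℝ) ≤ V.card / 8 := by
        by_contra h
        exact hxJ.2 ⟨hxA, not_le.1 h⟩
      obtain ⟨y, hy, z, hz, f1, f2, f3, f4⟩ : ∃ y ∈ V, ∃ z ∈ V, E c x y ∧ E c x z ∧ E c y z ∧ E x y z :=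
        good_of_codeg (A := V \ A) hε (by norm_num [hδ]) hV (by linarith) tc (hd x hx)
          (fun _ => by convert h8)
      exact transfer hE (k4_of hE f1 f2 f3 f4) hδ0 hδ1 hn4 (ft_ge hεδ (dgs _ _ _ _ hcV hx hy hz)) hA
        tA tB 0 (Or.inr tc) (by ring) 1
    · have h8 : ((V.filter fun y => ¬ E a x y).card : ℝ) ≤ V.card / 8 := by
        by_contra h
        exact hxJ.1 ⟨⟨hx, hxA⟩, not_le.1 h⟩
      obtain ⟨y, hy, z, hz, f1, f2, f3, f4⟩ : ∃ y ∈ V, ∃ z ∈ V, E a x y ∧ E a x z ∧ E a y z ∧ E x y z :=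
        good_of_codeg (A := A) hε (by norm_num [hδ]) hV (by linarith) ta (hd x hx)
          (fun _ => by convert h8)
      exact transfer hE (k4_of hE f1 f2 f3 f4) hδ0 hδ1 hn4 (ft_ge hεδ (dgs _ _ _ _ haV hx hy hz)) hA
        tA tB 0 (Or.inl ta) (by ring) 1
  have step3 : ∀ x ∈ V, (err E V A x : ℝ) ≤ (313 * (400 * δ)) * (V.card : ℝ) ^ 2 ∨
      (err E V (V \ A) x : ℝ) ≤ (313 * (400 * δ)) * (V.card : ℝ) ^ 2 := by
    intro x hx
    obtain ⟨y, hy, z, hz, q, hq, hqJ, f1, f2, f3, f4⟩ := exists_k4 hE hε hV cJ (hd x hx) hd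
    exact transfer hE (k4_of hE f1 f2 f3 f4) hδ0 hδ1 hn4 (ft_ge hεδ (dgs _ _ _ _ hx hy hz hq)) hA
        tA tB 3 (step2 q hq hqJ) (by ring) 0
  refine ⟨V.filter fun x => (err E V A x : ℝ) ≤ (313 * (400 * δ)) * (V.card : ℝ) ^ 2,
    filter_subset _ _, ?_, ?_⟩
  · intro x hx y hy z hz
    exact no_inner hE (by norm_num [hδ]) hV tB (mem_filter.1 hx).2 (mem_filter.1 hy).2
      (mem_filter.1 hz).2
  · have : ∀ x ∈ V \ (V.filter fun x => (err E V A x : ℝ) ≤ (313 * (400 * δ)) * (V.card : ℝ) ^ 2),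
        (err E V (V \ A) x : ℝ) ≤ (313 * (400 * δ)) * (V.card : ℝ) ^ 2 := by
      intro x hx
      rw [Finset.mem_sdiff, mem_filter] at hx
      rcases step3 x hx.1 with h | h
      · exact absurd ⟨hx.1, h⟩ hx.2
      · exact h
    intro x hx y hy z hz
    exact no_inner hE (by norm_num [hδ]) hV (by rw [dd]; exact tA) (this x hx) (this y hy)
      (this z hz)

end

/-- triple relation of an edge set -/
def rel (F : Finset (Finset ℕ)) (x y z : ℕ) : Prop := ({x, y, z} : Finset ℕ) ∈ F

/-- no Fano plane -/
def FF (F : Finset (Finset ℕ)) : Prop :=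
  ∀ p q r x y z w, rel F p q r → rel F p x y → rel F p z w → rel F q x z → rel F q y w →
    rel F r x w → rel F r y z → False

/-- three-uniform -/
def U3 (F : Finset (Finset ℕ)) : Prop := ∀ e ∈ F, e.card = 3

lemma rel_s12 {F : Finset (Finset ℕ)} {x y z : ℕ} (h : rel F x y z) : rel F y x z := by
  unfold rel at *; rwa [insert_comm]

lemma rel_s23 {F : Finset (Finset ℕ)} {x y z : ℕ} (h : rel F x y z) : rel F x z y := by
  unfold rel at *; rwa [pair_comm]

lemma rel_ne {F : Finset (Finset ℕ)} (h3 : U3 F) {x y z : ℕ} (h : rel F x y z) :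
    x ≠ y ∧ x ≠ z ∧ y ≠ z := by
  have := h3 _ h
  exact card_eq_three_iff.1 this
where
  card_eq_three_iff {x y z : ℕ} : ({x, y, z} : Finset ℕ).card = 3 ↔ x ≠ y ∧ x ≠ z ∧ y ≠ z := by
    constructor
    · intro h
      refine ⟨?_, ?_, ?_⟩
      · rintro rfl
        have := card_le_two (a := x) (b := z)
        simp at h; omega
      · rintro rfl
        have := card_le_two (a := x) (b := y)
        rw [insert_comm] at h
        simp at h
        have := card_le_two (a := y) (b := x)
        omega
      · rintro rfl
        have := card_le_two (a := x) (b := y)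
        simp at h; omega
    · rintro ⟨h1, h2, h3⟩
      rw [card_eq_three]
      exact ⟨x, y, z, h1, h2, h3, rfl⟩

lemma good_rel {F : Finset (Finset ℕ)} (h3 : U3 F) (hF : FF F) : Good (rel F) where
  s12 := fun _ _ _ h => rel_s12 h
  s23 := fun _ _ _ h => rel_s23 h
  irr := fun _ _ h => (rel_ne h3 h).1 rfl
  ff := hF

lemma U3.mono {F F' : Finset (Finset ℕ)} (h : F' ⊆ F) (h3 : U3 F) : U3 F' :=
  fun e he => h3 e (h he)

lemma FF.mono {F F' : Finset (Finset ℕ)} (h : F' ⊆ F) (hF : FF F) : FF F' :=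
  fun p q r x y z w h1 h2 h3 h4 h5 h6 h7 =>
    hF p q r x y z w (h h1) (h h2) (h h3) (h h4) (h h5) (h h6) (h h7)

/-- edges inside `U` -/
def eU (F : Finset (Finset ℕ)) (U : Finset ℕ) : ℕ := (F.filter fun e => e ⊆ U).card

/-- edges through `v` with the rest in `U` -/
def dv (F : Finset (Finset ℕ)) (U : Finset ℕ) (v : ℕ) : ℕ :=
  (F.filter fun e => v ∈ e ∧ e.erase v ⊆ U).card

lemma eU_erase {F : Finset (Finset ℕ)} {U : Finset ℕ} {v : ℕ} (hv : v ∈ U) :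
    eU F U = eU F (U.erase v) + dv F U v := by
  unfold eU dv
  rw [← card_union_of_disjoint]
  · congr 1
    ext e
    simp only [mem_filter, mem_union]
    constructor
    · rintro ⟨h1, h2⟩
      by_cases hve : v ∈ e
      · right
        exact ⟨h1, hve, (erase_subset _ _).trans h2⟩
      · left
        exact ⟨h1, fun q hq => mem_erase.2 ⟨fun h => hve (h ▸ hq), h2 hq⟩⟩
    · rintro (⟨h1, h2⟩ | ⟨h1, h2, h3⟩)
      · exact ⟨h1, h2.trans (erase_subset _ _)⟩
      · refine ⟨h1, fun q hq => ?_⟩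
        by_cases h : q = v
        · rw [h]; exact hv
        · exact h3 (mem_erase.2 ⟨h, hq⟩)
  · rw [disjoint_left]
    intro e he he'
    have h1 := (mem_filter.1 he).2 ((mem_filter.1 he').2.1)
    exact (mem_erase.1 h1).1 rfl

lemma two_dv_le {F : Finset (Finset ℕ)} (h3 : U3 F) (U : Finset ℕ) (v : ℕ) :
    2 * dv F U v ≤ dg (rel F) U v := by
  classical
  set S := (U ×ˢ U).filter fun p => rel F v p.1 p.2 with hS
  have hdg : dg (rel F) U v = S.card := by
    unfold dg
    rw [hS, card_filter, sum_product]
    refine sum_congr rfl fun y _ => ?_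
    rw [card_filter]
  set D := F.filter fun e => v ∈ e ∧ e.erase v ⊆ U with hD
  set T := S.filter fun p => ({v, p.1, p.2} : Finset ℕ) ∈ D
  have hTS : T.card ≤ S.card := card_le_card (filter_subset _ _)
  have hf := card_eq_sum_card_fiberwise (s := T) (t := D) (f := fun p => ({v, p.1, p.2} : Finset ℕ))
    (fun p hp => (mem_filter.1 hp).2)
  have h2 : ∀ e ∈ D, 2 ≤ (T.filter fun p => ({v, p.1, p.2} : Finset ℕ) = e).card := by
    intro e he
    have he' := mem_filter.1 he
    have hc : (e.erase v).card = 2 := by rw [card_erase_of_mem he'.2.1, h3 e he'.1]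
    obtain ⟨y, z, hyz, hyz'⟩ := card_eq_two.1 hc
    have hee : ({v, y, z} : Finset ℕ) = e := by rw [← hyz', insert_erase he'.2.1]
    have hee' : ({v, z, y} : Finset ℕ) = e := by rw [pair_comm]; exact hee
    have hy : y ∈ U := he'.2.2 (by rw [hyz']; simp)
    have hz : z ∈ U := he'.2.2 (by rw [hyz']; simp)
    have : ({(y, z), (z, y)} : Finset (ℕ × ℕ)) ⊆
        T.filter fun p => ({v, p.1, p.2} : Finset ℕ) = e := by
      intro p hp
      simp only [mem_insert, mem_singleton] at hp
      rcases hp with rfl | rfl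
      · refine mem_filter.2 ⟨mem_filter.2 ⟨mem_filter.2 ⟨mk_mem_product hy hz, ?_⟩, ?_⟩, hee⟩
        · show ({v, y, z} : Finset ℕ) ∈ F
          rw [hee]; exact he'.1
        · show ({v, y, z} : Finset ℕ) ∈ D
          rw [hee]; exact he
      · refine mem_filter.2 ⟨mem_filter.2 ⟨mem_filter.2 ⟨mk_mem_product hz hy, ?_⟩, ?_⟩, hee'⟩
        · show ({v, z, y} : Finset ℕ) ∈ F
          rw [hee']; exact he'.1
        · show ({v, z, y} : Finset ℕ) ∈ D
          rw [hee']; exact he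
    refine le_trans (le_of_eq ?_) (card_le_card this)
    rw [card_pair]
    intro h
    exact hyz (Prod.mk.inj h).1
  have : D.card * 2 ≤ T.card := by
    rw [hf, ← smul_eq_mul]
    exact card_nsmul_le_sum _ _ _ h2
  have hdv : dv F U v = D.card := by unfold dv; rw [hD]
  rw [hdg, hdv]
  omega

/-- number of crossing triples -/
def X (p q : ℕ) : ℕ := p.choose 2 * q + p * q.choose 2

def bb (m : ℕ) : ℕ := X (m / 2) (m - m / 2)

lemma choose_add (p q : ℕ) : (p + q).choose 3 = p.choose 3 + q.choose 3 + X p q := by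
  have h := Nat.add_choose_eq p q 3
  rw [h, Nat.sum_antidiagonal_eq_sum_range_succ_mk]
  simp [sum_range_succ, X]
  ring

lemma X_cast (p q : ℕ) : (X p q : ℝ) = p * q * (p + q - 2) / 2 := by
  unfold X
  push_cast
  rw [Nat.cast_choose_two, Nat.cast_choose_two]
  ring

lemma mul_le_half (p q : ℕ) : p * q ≤ (p + q) / 2 * (p + q - (p + q) / 2) ∧
    (p * q = (p + q) / 2 * (p + q - (p + q) / 2) → p = (p + q) / 2 ∨ q = (p + q) / 2) := by
  set k := (p + q) / 2
  obtain ⟨r, hr, hk⟩ : ∃ r, r ≤ 1 ∧ p + q = 2 * k + r := ⟨(p + q) % 2, by omega, by omega⟩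
  have h1 : p + q - k = k + r := by omega
  rw [h1]
  have hpq : (p : ℤ) + q = 2 * k + r := by exact_mod_cast hk
  have key : (4 : ℤ) * (p * q) = (2 * k + r) ^ 2 - (p - q) ^ 2 := by rw [← hpq]; ring
  have hr2 : (r : ℤ) ^ 2 = r := by
    interval_cases r <;> norm_num
  have hsq : (r : ℤ) ≤ (p - q) ^ 2 := by
    interval_cases r
    · positivity
    · have : (p : ℤ) - q ≠ 0 := by omega
      have := pow_pos (abs_pos.2 this) 2
      rw [sq_abs] at this
      push_cast; linarith
  constructor
  · zify; nlinarith
  · intro h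
    have h' : (p : ℤ) * q = k * (k + r) := by exact_mod_cast h
    have h2 : ((p : ℤ) - q) ^ 2 = r := by nlinarith
    interval_cases r
    · have : (p : ℤ) - q = 0 := by
        apply pow_eq_zero_iff (two_ne_zero) |>.1; simpa using h2
      omega
    · have h3 : ((p : ℤ) - q - 1) * (p - q + 1) = 0 := by push_cast at h2; linarith
      rcases mul_eq_zero.1 h3 with h | h <;> omega

lemma X_le (p q : ℕ) (h : 3 ≤ p + q) : X p q ≤ bb (p + q) ∧
    (X p q = bb (p + q) → p = (p + q) / 2 ∨ q = (p + q) / 2) := by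
  have hm := mul_le_half p q
  set k := (p + q) / 2 with hk
  have hs : (k : ℝ) + ((p + q - k : ℕ) : ℝ) = p + q := by
    have : k + (p + q - k) = p + q := by omega
    exact_mod_cast this
  have h1 := X_cast p q
  have h2 : (bb (p + q) : ℝ) = k * ((p + q - k : ℕ) : ℝ) * (p + q - 2) / 2 := by
    unfold bb; rw [X_cast, ← hk, hs]
  have h3 : (3 : ℝ) ≤ p + q := by exact_mod_cast h
  constructor
  · have : (X p q : ℝ) ≤ bb (p + q) := by
      rw [h1, h2]
      have : (p : ℝ) * q ≤ k * ((p + q - k : ℕ) : ℝ) := by exact_mod_cast hm.1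
      have h4 : (0 : ℝ) ≤ p + q - 2 := by linarith
      gcongr
    exact_mod_cast this
  · intro heq
    apply hm.2
    have heq' : (X p q : ℝ) = bb (p + q) := by exact_mod_cast heq
    rw [h1, h2] at heq'
    have h4 : (0 : ℝ) < p + q - 2 := by linarith
    have : (p : ℝ) * q * (p + q - 2) = k * ((p + q - k : ℕ) : ℝ) * (p + q - 2) := by linarith
    have := mul_right_cancel₀ h4.ne' this
    exact_mod_cast this

lemma bb_bounds (m : ℕ) (h : 2 ≤ m) : ((m : ℝ) ^ 2 - 1) * (m - 2) / 8 ≤ bb m ∧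
    (bb m : ℝ) ≤ (m : ℝ) ^ 2 * (m - 2) / 8 := by
  obtain ⟨k, r, hr, rfl⟩ : ∃ k r, r ≤ 1 ∧ m = 2 * k + r := ⟨m / 2, m % 2, by omega, by omega⟩
  have h1 : (2 * k + r) / 2 = k := by omega
  have h2 : 2 * k + r - k = k + r := by omega
  unfold bb
  rw [h1, h2, X_cast]
  have hk : (1 : ℝ) ≤ k := by exact_mod_cast (by omega : 1 ≤ k)
  interval_cases r
  · push_cast; constructor <;> nlinarith
  · push_cast; constructor <;> nlinarith

lemma bb_diff (m : ℕ) (h : 3 ≤ m) :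
    (3 * (m : ℝ) ^ 2 - 8 * m + 5) / 8 ≤ (bb m : ℝ) - bb (m - 1) := by
  have h1 := (bb_bounds m (by omega)).1
  have h2 := (bb_bounds (m - 1) (by omega)).2
  rw [Nat.cast_sub (by omega)] at h2
  push_cast at h2
  nlinarith

/-- the crossing triples -/
def cross (V P : Finset ℕ) : Finset (Finset ℕ) :=
  (powersetCard 3 V).filter fun e => ¬ e ⊆ P ∧ ¬ e ⊆ V \ P

lemma card_cross {V P : Finset ℕ} (hP : P ⊆ V) : (cross V P).card = X P.card (V \ P).card := by
  have hs : powersetCard 3 V = cross V P ∪ (powersetCard 3 P ∪ powersetCard 3 (V \ P)) := by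
    ext e
    simp only [cross, mem_union, mem_filter, mem_powersetCard]
    have h1 : e ⊆ P → e ⊆ V := fun h => h.trans hP
    have h2 : e ⊆ V \ P → e ⊆ V := fun h => h.trans sdiff_subset
    tauto
  have d1 : Disjoint (powersetCard 3 P) (powersetCard 3 (V \ P)) := by
    rw [disjoint_left]
    intro e h1 h2
    rw [mem_powersetCard] at h1 h2
    obtain ⟨x, hx⟩ : e.Nonempty := card_pos.1 (by omega)
    exact (Finset.mem_sdiff.1 (h2.1 hx)).2 (h1.1 hx)
  have d2 : Disjoint (cross V P) (powersetCard 3 P ∪ powersetCard 3 (V \ P)) := by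
    rw [disjoint_left]
    intro e h1 h2
    simp only [cross, mem_union, mem_filter, mem_powersetCard] at h1 h2
    tauto
  have hc := congrArg card hs
  rw [card_union_of_disjoint d2, card_union_of_disjoint d1, card_powersetCard, card_powersetCard,
    card_powersetCard, ← card_sdiff_add_card_eq_card hP, add_comm (V \ P).card, choose_add] at hc
  omega


lemma eU_le {F : Finset (Finset ℕ)} (h3 : U3 F) (U : Finset ℕ) :
    (eU F U : ℝ) ≤ (U.card : ℝ) ^ 3 := by
  have h1 : eU F U ≤ (powersetCard 3 U).card := by
    apply card_le_card
    intro e he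
    rw [mem_filter] at he
    exact mem_powersetCard.2 ⟨he.2, h3 e he.1⟩
  rw [card_powersetCard] at h1
  have h2 := Nat.choose_le_pow U.card 3
  exact_mod_cast h1.trans h2

lemma eU_self {F : Finset (Finset ℕ)} {V : Finset ℕ} (hV : ∀ e ∈ F, e ⊆ V) : eU F V = F.card := by
  unfold eU; rw [filter_true_of_mem hV]

lemma eU_le_cross {F : Finset (Finset ℕ)} (h3 : U3 F) {U P : Finset ℕ}
    (h1 : ∀ x ∈ P, ∀ y ∈ P, ∀ z ∈ P, ¬ rel F x y z)
    (h2 : ∀ x ∈ U \ P, ∀ y ∈ U \ P, ∀ z ∈ U \ P, ¬ rel F x y z) :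
    (F.filter fun e => e ⊆ U) ⊆ cross U P := by
  intro e he
  rw [mem_filter] at he
  obtain ⟨x, y, z, -, -, -, rfl⟩ := card_eq_three.1 (h3 e he.1)
  refine mem_filter.2 ⟨mem_powersetCard.2 ⟨he.2, h3 _ he.1⟩, fun h => ?_, fun h => ?_⟩
  · exact h1 x (h (by simp)) y (h (by simp)) z (h (by simp)) he.1
  · exact h2 x (h (by simp)) y (h (by simp)) z (h (by simp)) he.1

theorem exact_thm {F : Finset (Finset ℕ)} {V : Finset ℕ} (h3 : U3 F) (hF : FF F)
    (hV : ∀ e ∈ F, e ⊆ V) (hN : 10 ^ 55 ≤ V.card) (h : bb V.card ≤ F.card) :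
    ∃ P ⊆ V, P.card = V.card / 2 ∧ F = cross V P := by
  obtain ⟨U, hU, hmax⟩ := exists_max_image V.powerset
    (fun U => (eU F U : ℝ) - bb U.card + U.card) ⟨V, mem_powerset_self V⟩
  rw [mem_powerset] at hU
  have h1 := hmax V (mem_powerset_self V)
  have hNr : (10 : ℝ) ^ 55 ≤ V.card := by exact_mod_cast hN
  have hr : (bb V.card : ℝ) ≤ F.card := by exact_mod_cast h
  rw [eU_self hV] at h1
  have hbig : (10 : ℝ) ^ 18 ≤ U.card := by
    by_contra hc
    have hc' : (U.card : ℝ) ≤ 10 ^ 18 := (not_le.1 hc).le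
    have h2 := eU_le h3 U
    have h4 : (U.card : ℝ) ^ 3 ≤ (10 ^ 18) ^ 3 := by gcongr
    have h5 : (0 : ℝ) ≤ bb U.card := by positivity
    have h6 : ((10 : ℝ) ^ 18) ^ 3 + 10 ^ 18 < 10 ^ 55 := by norm_num
    linarith
  have hbn : 10 ^ 18 ≤ U.card := by exact_mod_cast hbig
  have hdeg : ∀ x ∈ U, (3 / 4 - 1 / 10 ^ 17) * (U.card : ℝ) ^ 2 ≤ dg (rel F) U x := by
    intro x hx
    have h2 := hmax (U.erase x) (mem_powerset.2 ((erase_subset _ _).trans hU))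
    have h4 : (eU F U : ℝ) = eU F (U.erase x) + dv F U x := by exact_mod_cast eU_erase hx
    have h5 : (2 * dv F U x : ℝ) ≤ dg (rel F) U x := by exact_mod_cast two_dv_le h3 U x
    have h6 := bb_diff U.card (le_trans (by norm_num) hbn)
    have h8 : ((U.erase x).card : ℝ) = U.card - 1 := by
      rw [card_erase_of_mem hx, Nat.cast_sub (card_pos.2 ⟨x, hx⟩)]; simp
    rw [h8, card_erase_of_mem hx] at h2
    have h9 : (10 : ℝ) ^ 18 * U.card ≤ (U.card : ℝ) ^ 2 := by
      rw [sq]; gcongr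
    norm_num at h9 hbig ⊢
    linarith
  obtain ⟨P, hP, hP1, hP2⟩ := deg_stab (good_rel h3 hF) (le_trans (by norm_num) hbn) hdeg
  have hsub := eU_le_cross h3 hP1 hP2
  have hcs := card_sdiff_add_card_eq_card hP
  have h6 : eU F U ≤ X P.card (U \ P).card := by
    rw [← card_cross hP]; exact card_le_card hsub
  have h7 := X_le P.card (U \ P).card (by
    rw [add_comm, hcs]; exact le_trans (by norm_num) hbn)
  rw [add_comm P.card, hcs] at h7
  have h6r : (eU F U : ℝ) ≤ bb U.card := by exact_mod_cast h6.trans h7.1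
  have hUV : V.card ≤ U.card := by
    have : (V.card : ℝ) ≤ U.card := by linarith
    exact_mod_cast this
  obtain rfl := eq_of_subset_of_card_le hU hUV
  rw [eU_self hV] at h6
  rw [filter_true_of_mem hV] at hsub
  have heq : X P.card (U \ P).card = bb U.card := le_antisymm h7.1 (h.trans h6)
  have hFc : F = cross U P := by
    apply eq_of_subset_of_card_le hsub
    rw [card_cross hP, heq]; exact h
  rcases h7.2 heq with h8 | h8
  · exact ⟨P, hP, h8, hFc⟩
  · refine ⟨U \ P, sdiff_subset, h8, ?_⟩
    rw [hFc]
    unfold cross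
    rw [Finset.sdiff_sdiff_eq_self hP]
    congr 1
    ext e
    tauto

lemma card_cross_le {V P : Finset ℕ} (hP : P ⊆ V) (hc : P.card = V.card / 2) :
    (cross V P).card = bb V.card := by
  rw [card_cross hP]
  unfold bb
  rw [hc, card_sdiff_of_subset hP, hc]

theorem upper {F : Finset (Finset ℕ)} {V : Finset ℕ} (h3 : U3 F) (hF : FF F)
    (hV : ∀ e ∈ F, e ⊆ V) (hN : 10 ^ 55 ≤ V.card) : F.card ≤ bb V.card := by
  by_contra h
  obtain ⟨P, hP, hc, rfl⟩ := exact_thm h3 hF hV hN (by omega)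
  rw [card_cross_le hP hc] at h
  omega

lemma dv_lower {F : Finset (Finset ℕ)} {V : Finset ℕ} (h3 : U3 F) (hV : ∀ e ∈ F, e ⊆ V)
    (U : Finset ℕ) (v : ℕ) : dv F V v ≤ dv F U v + (V \ U).card * V.card := by
  classical
  have hs : (F.filter fun e => v ∈ e ∧ e.erase v ⊆ V) ⊆ (F.filter fun e => v ∈ e ∧ e.erase v ⊆ U) ∪
      ((V \ U) ×ˢ V).image fun p => ({v, p.1, p.2} : Finset ℕ) := by
    intro e he
    rw [mem_filter] at he
    rw [mem_union]
    by_cases h : e.erase v ⊆ U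
    · left; exact mem_filter.2 ⟨he.1, he.2.1, h⟩
    · right
      have hc : (e.erase v).card = 2 := by rw [card_erase_of_mem he.2.1, h3 e he.1]
      obtain ⟨y, z, hyz, hyz'⟩ := card_eq_two.1 hc
      have hee : ({v, y, z} : Finset ℕ) = e := by rw [← hyz', insert_erase he.2.1]
      have hee' : ({v, z, y} : Finset ℕ) = e := by rw [pair_comm]; exact hee
      have hy : y ∈ V := he.2.2 (by rw [hyz']; simp)
      have hz : z ∈ V := he.2.2 (by rw [hyz']; simp)
      rw [mem_image]
      by_cases hyU : y ∈ U
      · refine ⟨(z, y), mk_mem_product (Finset.mem_sdiff.2 ⟨hz, fun hzU => h ?_⟩) hy, hee'⟩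
        rw [hyz']
        intro q hq
        simp only [mem_insert, mem_singleton] at hq
        rcases hq with rfl | rfl <;> assumption
      · exact ⟨(y, z), mk_mem_product (Finset.mem_sdiff.2 ⟨hy, hyU⟩) hz, hee⟩
  unfold dv
  refine (card_le_card hs).trans ((card_union_le _ _).trans ?_)
  gcongr
  exact card_image_le.trans (le_of_eq (card_product _ _))

set_option maxHeartbeats 1000000 in
theorem bounded {F : Finset (Finset ℕ)} {V : Finset ℕ} (h3 : U3 F) (hF : FF F)
    (hV : ∀ e ∈ F, e ⊆ V) (hN : 10 ^ 57 ≤ V.card)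
    (he : (1 / 8 - 1 / 10 ^ 10) * (V.card : ℝ) ^ 3 ≤ F.card) (v : ℕ) :
    (dv F V v : ℝ) < (3 / 8 + 1 / 100) * (V.card : ℝ) ^ 2 := by
  by_contra! hcon
  obtain ⟨U, hU, hmax⟩ := exists_max_image V.powerset
    (fun U => (eU F U : ℝ) - (1 / 8 - 1 / 10 ^ 4) * (U.card : ℝ) ^ 3) ⟨V, mem_powerset_self V⟩
  rw [mem_powerset] at hU
  have h1 := hmax V (mem_powerset_self V)
  have hNr : (10 : ℝ) ^ 57 ≤ V.card := by exact_mod_cast hN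
  have hUV : (U.card : ℝ) ≤ V.card := by exact_mod_cast card_le_card hU
  rw [eU_self hV] at h1
  set m : ℝ := (V.card : ℝ) with hm
  have hm0 : 0 < m := lt_of_lt_of_le (by positivity) hNr
  set u : ℝ := (U.card : ℝ) with hu
  have hu0 : 0 ≤ u := Nat.cast_nonneg _
  have hm3 : 0 < m ^ 3 := by positivity
  have hbig : (10 : ℝ) ^ 55 ≤ u := by
    by_contra hc
    have hc' : u ≤ 10 ^ 55 := (not_le.1 hc).le
    have h2 := eU_le h3 U
    have h4 : (100 * u) ^ 3 ≤ m ^ 3 := by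
      have : 100 * u ≤ m := by
        norm_num at hc' hNr; linarith
      gcongr
    have h5 : 0 ≤ u ^ 3 := by positivity
    change (eU F U : ℝ) ≤ u ^ 3 at h2
    nlinarith
  have hbn : 10 ^ 55 ≤ U.card := by rw [hu] at hbig; exact_mod_cast hbig
  have hup : (eU F U : ℝ) ≤ u ^ 3 / 8 := by
    have h2 := upper (h3.mono (filter_subset (fun e => e ⊆ U) F)) (hF.mono (filter_subset _ F))
      (fun e he => (mem_filter.1 he).2) hbn
    have h4 := (bb_bounds U.card (le_trans (by norm_num) hbn)).2
    have h5 : (eU F U : ℝ) ≤ bb U.card := by exact_mod_cast h2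
    refine h5.trans (h4.trans ?_)
    have : 0 ≤ u ^ 2 := by positivity
    nlinarith
  have hum : (1 - 1 / 10 ^ 6) * m ≤ u := by
    by_contra hc
    have hc' := (not_le.1 hc).le
    have h2 : u ^ 3 ≤ ((1 - 1 / 10 ^ 6) * m) ^ 3 := by gcongr
    rw [mul_pow] at h2
    norm_num at h2 h1 he
    linarith
  have hu1 : 0 < u := by nlinarith
  have hdeg : ∀ x ∈ U, (3 / 4 - 8 / 10 ^ 4) * u ^ 2 ≤ dg (rel F) U x := by
    intro x hx
    have h2 := hmax (U.erase x) (mem_powerset.2 ((erase_subset _ _).trans hU))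
    have h4 : (eU F U : ℝ) = eU F (U.erase x) + dv F U x := by exact_mod_cast eU_erase hx
    have h5 : (2 * dv F U x : ℝ) ≤ dg (rel F) U x := by exact_mod_cast two_dv_le h3 U x
    have h8 : ((U.erase x).card : ℝ) = u - 1 := by
      rw [card_erase_of_mem hx, Nat.cast_sub (card_pos.2 ⟨x, hx⟩)]; simp [hu]
    simp only [h8] at h2
    have h9 : (10 : ℝ) ^ 55 * u ≤ u ^ 2 := by
      rw [sq]; gcongr
    have h10 : (u - 1) ^ 3 = u ^ 3 - 3 * u ^ 2 + 3 * u - 1 := by ring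
    rw [h10] at h2
    norm_num at h9 h2 ⊢
    linarith
  have hv : (3 / 4 + 1 / 100) * u ^ 2 ≤ dg (rel F) U v := by
    have h5 : (2 * dv F U v : ℝ) ≤ dg (rel F) U v := by exact_mod_cast two_dv_le h3 U v
    have h2 : (dv F V v : ℝ) ≤ dv F U v + (V \ U).card * m := by
      rw [hm]; exact_mod_cast dv_lower h3 hV U v
    have h4 : ((V \ U).card : ℝ) = m - u := by
      rw [card_sdiff_of_subset hU, Nat.cast_sub (card_le_card hU)]
    rw [h4] at h2
    have h6 : (m - u) * m ≤ (1 / 10 ^ 6 * m) * m := by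
      gcongr; linarith
    have h7 : u ^ 2 ≤ m ^ 2 := by gcongr
    norm_num at h6
    nlinarith
  have hu2 : 0 < u ^ 2 := by positivity
  obtain ⟨y, hy, z, hz, q, hq, -, f1, f2, f3, f4⟩ := exists_k4 (good_rel h3 hF) (J := ∅)
    (ε := 8 / 10 ^ 4) (by norm_num) (card_pos.1 (lt_of_lt_of_le (by norm_num) hbn))
    (by simp; positivity) (x := v) (le_trans (by nlinarith) hv) hdeg
  have hK := k4_of (good_rel h3 hF) f1 f2 f3 f4
  have hle := ft_le (good_rel h3 hF) hK _ U rfl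
  rw [ft_eq_dg, Fin.sum_univ_four] at hle
  have hle' : (dg (rel F) U v + dg (rel F) U y + dg (rel F) U z + dg (rel F) U q : ℝ) ≤ 3 * u ^ 2 := by
    change dg (rel F) U v + dg (rel F) U y + dg (rel F) U z + dg (rel F) U q ≤ 3 * U.card ^ 2 at hle
    rw [hu]; exact_mod_cast hle
  have a1 := hdeg y hy
  have a2 := hdeg z hz
  have a3 := hdeg q hq
  norm_num at a1 a2 a3 hv
  linarith


/-- vertex sets of Fano planes -/
def IsF (F : Finset (Finset ℕ)) (S : Finset ℕ) : Prop :=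
  S.card = 7 ∧ ∃ p q r x y z w, S = {p, q, r, x, y, z, w} ∧ rel F p q r ∧ rel F p x y ∧
    rel F p z w ∧ rel F q x z ∧ rel F q y w ∧ rel F r x w ∧ rel F r y z

/-- disjoint Fano planes -/
def Mt (F : Finset (Finset ℕ)) (k : ℕ) : Prop :=
  ∃ S : Fin k → Finset ℕ, (∀ i, IsF F (S i)) ∧ ∀ i j, i ≠ j → Disjoint (S i) (S j)

lemma rel_mono {F F' : Finset (Finset ℕ)} (h : F' ⊆ F) {x y z : ℕ} (hr : rel F' x y z) :
    rel F x y z := h hr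

lemma IsF.mono {F F' : Finset (Finset ℕ)} (h : F' ⊆ F) {S : Finset ℕ} (hS : IsF F' S) :
    IsF F S := by
  obtain ⟨h0, p, q, r, x, y, z, w, hS, h1, h2, h3, h4, h5, h6, h7⟩ := hS
  exact ⟨h0, p, q, r, x, y, z, w, hS, h h1, h h2, h h3, h h4, h h5, h h6, h h7⟩

lemma IsF.prop {F : Finset (Finset ℕ)} {S : Finset ℕ} (hS : IsF F S) {Q : ℕ → Prop}
    (hQ : ∀ e ∈ F, ∀ x ∈ e, Q x) : ∀ x ∈ S, Q x := by
  obtain ⟨h0, p, q, r, x, y, z, w, rfl, h1, h2, h3, h4, h5, h6, h7⟩ := hS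
  intro a ha
  simp only [mem_insert, mem_singleton] at ha
  rcases ha with rfl | rfl | rfl | rfl | rfl | rfl | rfl
  · exact hQ _ h1 _ (by simp)
  · exact hQ _ h1 _ (by simp)
  · exact hQ _ h1 _ (by simp)
  · exact hQ _ h2 _ (by simp)
  · exact hQ _ h2 _ (by simp)
  · exact hQ _ h3 _ (by simp)
  · exact hQ _ h3 _ (by simp)

lemma exists_IsF {F : Finset (Finset ℕ)} (h3 : U3 F) (h : ¬ FF F) : ∃ S, IsF F S := by
  unfold FF at h
  push Not at h
  obtain ⟨p, q, r, x, y, z, w, h1, h2, h4, h5, h6, h7, h8, -⟩ := h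
  refine ⟨{p, q, r, x, y, z, w}, ?_, p, q, r, x, y, z, w, rfl, h1, h2, h4, h5, h6, h7, h8⟩
  have a1 := rel_ne h3 h1
  have a2 := rel_ne h3 h2
  have a3 := rel_ne h3 h4
  have a4 := rel_ne h3 h5
  have a5 := rel_ne h3 h6
  have a6 := rel_ne h3 h7
  have a7 := rel_ne h3 h8
  rw [card_insert_of_notMem, card_insert_of_notMem, card_insert_of_notMem, card_insert_of_notMem,
    card_insert_of_notMem, card_insert_of_notMem, card_singleton]
  all_goals simp only [mem_insert, mem_singleton]
  all_goals tauto

lemma Mt.cons {F F' : Finset (Finset ℕ)} (h : F' ⊆ F) {k : ℕ} {S : Fin k → Finset ℕ}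
    (h1 : ∀ i, IsF F (S i)) (h2 : ∀ i j, i ≠ j → Disjoint (S i) (S j)) {T : Finset ℕ}
    (hT : IsF F T) (h3 : ∀ i, Disjoint T (S i)) : Mt F (k + 1) := by
  refine ⟨Fin.cons T S, fun i => ?_, fun i j => ?_⟩
  · refine Fin.cases ?_ (fun i => ?_) i
    · simpa using hT
    · simpa using h1 i
  · refine Fin.cases ?_ (fun i => ?_) i <;> refine Fin.cases ?_ (fun j => ?_) j
    · simp
    · intro _; simpa using h3 j
    · intro _; simpa using (h3 i).symm
    · intro hij
      simpa using h2 i j (fun h => hij (by rw [h]))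

lemma choose3_succ (k : ℕ) : (k + 1).choose 3 = k.choose 2 + k.choose 3 := Nat.choose_succ_succ' k 2

/-- triples through `v` -/
lemma card_thru {V : Finset ℕ} {v : ℕ} (hv : v ∈ V) :
    ((powersetCard 3 V).filter fun e => v ∈ e).card = (V.card - 1).choose 2 := by
  have h1 := card_filter_add_card_filter_not (s := powersetCard 3 V) (fun e => v ∈ e)
  have h2 : ((powersetCard 3 V).filter fun e => ¬ v ∈ e) = powersetCard 3 (V.erase v) := by
    ext e
    simp only [mem_filter, mem_powersetCard, subset_erase]
    tauto
  rw [h2, card_powersetCard, card_powersetCard, card_erase_of_mem hv] at h1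
  obtain ⟨k, hk⟩ : ∃ k, V.card = k + 1 := ⟨V.card - 1, by have := card_pos.2 ⟨v, hv⟩; omega⟩
  rw [hk, choose3_succ] at h1
  rw [hk]
  simp only [Nat.add_sub_cancel] at *
  omega

/-- the extremal edge sets -/
def md (V T P : Finset ℕ) : Finset (Finset ℕ) :=
  (powersetCard 3 V).filter fun e => ¬ e ⊆ P ∧ ¬ e ⊆ (V \ T) \ P

lemma card_md {V T P : Finset ℕ} (hT : T ⊆ V) (hP : P ⊆ V \ T) (hc : P.card = (V \ T).card / 2) :
    (md V T P).card + (V \ T).card.choose 3 = V.card.choose 3 + bb (V \ T).card := by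
  have h1 := card_cross_le hP hc
  have h2 : md V T P = (powersetCard 3 V \ powersetCard 3 (V \ T)) ∪ cross (V \ T) P := by
    ext e
    simp only [md, cross, mem_union, Finset.mem_sdiff, mem_filter, mem_powersetCard]
    have a1 : e ⊆ P → e ⊆ V \ T := fun h => h.trans hP
    have a2 : e ⊆ (V \ T) \ P → e ⊆ V \ T := fun h => h.trans sdiff_subset
    have a3 : e ⊆ V \ T → e ⊆ V := fun h => h.trans sdiff_subset
    tauto
  have hs : powersetCard 3 (V \ T) ⊆ powersetCard 3 V := powersetCard_mono sdiff_subset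
  have h3 : Disjoint (powersetCard 3 V \ powersetCard 3 (V \ T)) (cross (V \ T) P) := by
    rw [disjoint_left]
    intro e h h'
    exact (Finset.mem_sdiff.1 h).2 (mem_filter.1 h').1
  have h4 := card_sdiff_add_card_eq_card hs
  rw [card_powersetCard, card_powersetCard] at h4
  rw [h2, card_union_of_disjoint h3, h1]
  omega

lemma meet_le (F : Finset (Finset ℕ)) (W : Finset ℕ) :
    F.card ≤ (F.filter fun e => Disjoint e W).card + ∑ w ∈ W, (F.filter fun e => w ∈ e).card := by
  rw [← card_filter_add_card_filter_not (s := F) (fun e => Disjoint e W)]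
  gcongr
  refine le_trans (card_le_card ?_) card_biUnion_le
  intro e he
  rw [mem_filter, not_disjoint_iff] at he
  obtain ⟨h1, a, h2, h3⟩ := he
  exact mem_biUnion.2 ⟨a, h3, mem_filter.2 ⟨h1, h2⟩⟩

lemma deg_le {F : Finset (Finset ℕ)} (h3 : U3 F) {V : Finset ℕ} (hV : ∀ e ∈ F, e ⊆ V) {v : ℕ}
    (hv : v ∈ V) : (F.filter fun e => v ∈ e).card ≤ (V.card - 1).choose 2 := by
  rw [← card_thru hv]
  apply card_le_card
  intro e he
  rw [mem_filter] at he ⊢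
  exact ⟨mem_powersetCard.2 ⟨hV e he.1, h3 e he.1⟩, he.2⟩

/-- removing a matching leaves a Fano-free graph -/
lemma remove {F : Finset (Finset ℕ)} (h3 : U3 F) {V : Finset ℕ} (hV : ∀ e ∈ F, e ⊆ V) {t v : ℕ}
    (hno : ¬ Mt F (t + 1)) (hm : Mt (F.filter fun e => v ∉ e) t) :
    ∃ W ⊆ V, W.card = 7 * t ∧ v ∉ W ∧ FF (F.filter fun e => Disjoint e W) := by
  obtain ⟨S, h1, h2⟩ := hm
  refine ⟨univ.biUnion S, ?_, ?_, ?_, ?_⟩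
  · intro a ha
    obtain ⟨i, -, hi⟩ := mem_biUnion.1 ha
    exact (h1 i).prop (Q := fun x => x ∈ V) (fun e he x hx => hV e (mem_filter.1 he).1 hx) a hi
  · rw [card_biUnion (fun i _ j _ hij => h2 i j hij), sum_congr rfl (fun i _ => (h1 i).1)]
    simp [mul_comm]
  · intro ha
    obtain ⟨i, -, hi⟩ := mem_biUnion.1 ha
    refine (h1 i).prop (Q := fun x => x ≠ v) (fun e he x hx hxv => ?_) v hi rfl
    exact (mem_filter.1 he).2 (hxv ▸ hx)
  · by_contra hc
    obtain ⟨T, hT⟩ := exists_IsF (h3.mono (filter_subset _ F)) hc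
    refine hno (Mt.cons (Subset.refl F) (fun i => (h1 i).mono (filter_subset _ _)) h2
      (hT.mono (filter_subset _ _)) fun i => ?_)
    rw [disjoint_left]
    intro a ha hai
    refine hT.prop (Q := fun x => x ∉ univ.biUnion S) (fun e he x hx => ?_) a ha
      (mem_biUnion.2 ⟨i, mem_univ i, hai⟩)
    exact disjoint_left.1 (mem_filter.1 he).2 hx

lemma choose3_lower (m t : ℕ) : m.choose 3 + t * m.choose 2 ≤ (m + t).choose 3 := by
  induction t with
  | zero => simp
  | succ t ih =>
    rw [← add_assoc, choose3_succ]
    have := Nat.choose_le_choose 2 (Nat.le_add_right m t)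
    nlinarith

lemma arith {m t : ℝ} (hm : 10 ^ 60 ≤ m) (ht : 1 ≤ t) (hmt : 10 ^ 20 * t ≤ m) {b b' e : ℝ}
    (hb : (m ^ 2 - 1) * (m - 2) / 8 ≤ b) (hb' : b' ≤ (m - 6 * t) ^ 2 * (m - 6 * t - 2) / 8)
    (he : t * (m * (m - 1) / 2) + b ≤ e) : b' + 7 * t * (39 / 100 * m ^ 2) < e := by
  have h1 : 10 ^ 20 * t * (t * m) ≤ m * (t * m) := by
    have : 0 ≤ t * m := by nlinarith
    gcongr
  have h2 : 10 ^ 60 * (t * m) ≤ m * (t * m) := by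
    have : 0 ≤ t * m := by nlinarith
    gcongr
  have h3 : m ≤ t * m := by nlinarith
  have h4 : 0 < t * m := by nlinarith
  have h5 : 0 ≤ t ^ 3 := by positivity
  have h6 : 0 ≤ t ^ 2 := by positivity
  norm_num at h1 h2
  nlinarith

set_option maxHeartbeats 1000000 in
/-- some vertex meets all maximum matchings -/
lemma key {F : Finset (Finset ℕ)} (h3 : U3 F) {V : Finset ℕ} (hV : ∀ e ∈ F, e ⊆ V) {m t : ℕ}
    (hm : 10 ^ 60 ≤ m) (ht : 1 ≤ t) (hmt : 10 ^ 20 * t ≤ m) (hVc : V.card = m + t)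
    (hno : ¬ Mt F (t + 1)) (hF : (m + t).choose 3 + bb m ≤ F.card + m.choose 3) :
    ∃ v ∈ V, ¬ Mt (F.filter fun e => v ∉ e) t := by
  by_contra! hcon
  obtain ⟨v₀, hv₀⟩ : V.Nonempty := card_pos.1 (by omega)
  have hmr : (10 : ℝ) ^ 60 ≤ m := by exact_mod_cast hm
  have htr : (1 : ℝ) ≤ t := by exact_mod_cast ht
  have hmtr : (10 : ℝ) ^ 20 * t ≤ m := by exact_mod_cast hmt
  have hbb := (bb_bounds m (le_trans (by norm_num) hm)).1
  have hsd : ∀ W ⊆ V, W.card = 7 * t → (V \ W).card = m - 6 * t := by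
    intro W hW hc
    rw [card_sdiff_of_subset hW, hc, hVc]; omega
  have hlow : (t : ℝ) * (m * (m - 1) / 2) + bb m ≤ F.card := by
    have h1 := choose3_lower m t
    have h2 : t * m.choose 2 + bb m ≤ F.card := by omega
    have h4 : ((t * m.choose 2 + bb m : ℕ) : ℝ) ≤ F.card := by exact_mod_cast h2
    push_cast at h4
    rwa [Nat.cast_choose_two] at h4
  have hcast : ((m - 6 * t : ℕ) : ℝ) = m - 6 * t := by
    rw [Nat.cast_sub (by omega)]; push_cast; rfl
  have hsub : ∀ W : Finset ℕ, ∀ e ∈ F.filter (fun e => Disjoint e W), e ⊆ V \ W := by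
    intro W e he a ha
    rw [mem_filter] at he
    exact Finset.mem_sdiff.2 ⟨hV e he.1 ha, disjoint_left.1 he.2 ha⟩
  obtain ⟨w, hwV, hw⟩ : ∃ w ∈ V, 39 / 100 * (m : ℝ) ^ 2 < (F.filter fun e => w ∈ e).card := by
    obtain ⟨W, hWV, hWc, -, hWF⟩ := remove h3 hV hno (hcon v₀ hv₀)
    by_contra! hle
    have h1 := meet_le F W
    have h2 := upper (h3.mono (filter_subset _ F)) hWF (hsub W) (by rw [hsd W hWV hWc]; omega)
    rw [hsd W hWV hWc] at h2
    have h4 := (bb_bounds (m - 6 * t) (by omega)).2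
    rw [hcast] at h4
    have h5 := arith hmr htr hmtr hbb h4 hlow
    have h6 : (F.card : ℝ) ≤ bb (m - 6 * t) + ∑ w ∈ W, ((F.filter fun e => w ∈ e).card : ℝ) := by
      exact_mod_cast h1.trans (by gcongr)
    have h7 : ∑ w ∈ W, ((F.filter fun e => w ∈ e).card : ℝ) ≤ ∑ w ∈ W, 39 / 100 * (m : ℝ) ^ 2 :=
      sum_le_sum fun w hw => hle w (hWV hw)
    rw [sum_const, hWc, nsmul_eq_mul] at h7
    push_cast at h7
    linarith
  obtain ⟨W, hWV, hWc, hwW, hWF⟩ := remove h3 hV hno (hcon w hwV)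
  have hUc := hsd W hWV hWc
  have hn : ((m + t : ℕ) : ℝ) ≤ 2 * m := by push_cast; nlinarith
  have hedge : (1 / 8 - 1 / 10 ^ 10) * ((V \ W).card : ℝ) ^ 3 ≤
      (F.filter fun e => Disjoint e W).card := by
    rw [hUc]
    have h1 := meet_le F W
    have h2 : ∀ w ∈ W, (F.filter fun e => w ∈ e).card ≤ (m + t) ^ 2 := fun w hw =>
      (deg_le h3 hV (hWV hw)).trans ((Nat.choose_le_pow _ 2).trans
        (Nat.pow_le_pow_left (by omega) 2))
    have h4 := sum_le_sum h2
    rw [sum_const, hWc, smul_eq_mul] at h4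
    have h5 : (F.card : ℝ) ≤ (F.filter fun e => Disjoint e W).card +
        7 * t * ((m + t : ℕ) : ℝ) ^ 2 := by exact_mod_cast h1.trans (by gcongr)
    have h6 : 7 * t * ((m + t : ℕ) : ℝ) ^ 2 ≤ 7 * t * (2 * m) ^ 2 := by gcongr
    have h7 : ((m - 6 * t : ℕ) : ℝ) ^ 3 ≤ (m : ℝ) ^ 3 := by
      gcongr; omega
    have h8 : (10 : ℝ) ^ 20 * t * m ^ 2 ≤ m * m ^ 2 := by gcongr
    have h9 : (10 : ℝ) ^ 60 * m ^ 2 ≤ m * m ^ 2 := by gcongr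
    have h10 : 0 ≤ (t : ℝ) * (m * (m - 1) / 2) := by
      have : (1 : ℝ) ≤ m := by linarith [show (1 : ℝ) ≤ 10 ^ 60 by norm_num]
      have : (0 : ℝ) ≤ m - 1 := by linarith
      positivity
    have h11 : (m : ℝ) ≤ m ^ 2 := by
      have : (1 : ℝ) ≤ m := by linarith [show (1 : ℝ) ≤ 10 ^ 60 by norm_num]
      nlinarith
    have h12 : (0 : ℝ) ≤ m ^ 2 := by positivity
    have h13 : (1 / 8 - 1 / 10 ^ 10) * ((m - 6 * t : ℕ) : ℝ) ^ 3 ≤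
      (1 / 8 - 1 / 10 ^ 10) * (m : ℝ) ^ 3 := by
      apply mul_le_mul_of_nonneg_left h7; norm_num
    refine h13.trans ?_
    generalize ((F.filter fun e => Disjoint e W).card : ℝ) = c at *
    generalize (m : ℝ) = M at *
    generalize (t : ℝ) = T at *
    generalize (bb m : ℝ) = B at *
    norm_num at h8 h9 ⊢
    nlinarith
  have hb := bounded (h3.mono (filter_subset _ F)) hWF (hsub W)
    (by rw [hUc]; omega) hedge w
  have hd1 := dv_lower h3 hV (V \ W) w
  rw [Finset.sdiff_sdiff_eq_self hWV, hWc, hVc] at hd1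
  have hd2 : dv F V w = (F.filter fun e => w ∈ e).card := by
    unfold dv
    congr 1
    ext e
    simp only [mem_filter]
    constructor
    · tauto
    · rintro ⟨h1, h2⟩
      exact ⟨h1, h2, (erase_subset _ _).trans (hV e h1)⟩
  have hd3 : dv F (V \ W) w ≤ dv (F.filter fun e => Disjoint e W) (V \ W) w := by
    unfold dv
    apply card_le_card
    intro e he
    simp only [mem_filter] at he ⊢
    refine ⟨⟨he.1, ?_⟩, he.2⟩
    rw [disjoint_left]
    intro a ha haW
    have : a ∈ e.erase w := mem_erase.2 ⟨fun h => hwW (h ▸ haW), ha⟩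
    exact (Finset.mem_sdiff.1 (he.2.2 this)).2 haW
  have hd4 : ((F.filter fun e => w ∈ e).card : ℝ) ≤
      dv (F.filter fun e => Disjoint e W) (V \ W) w + 7 * t * ((m + t : ℕ) : ℝ) := by
    rw [hd2] at hd1
    exact_mod_cast hd1.trans (by gcongr)
  have h6 : 7 * t * ((m + t : ℕ) : ℝ) ≤ 7 * t * (2 * m) := by gcongr
  have h8 : (10 : ℝ) ^ 20 * t * m ≤ m * m := by gcongr
  have h7 : (((V \ W).card : ℕ) : ℝ) ^ 2 ≤ (m : ℝ) ^ 2 := by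
    rw [hUc]; gcongr; omega
  have h9 : (0 : ℝ) < m ^ 2 := by
    have : (0 : ℝ) < m := lt_of_lt_of_le (by positivity) hmr
    positivity
  norm_num at h8
  nlinarith

theorem main {m : ℕ} (hm : 10 ^ 60 ≤ m) (t : ℕ) : 10 ^ 20 * t ≤ m → ∀ (F : Finset (Finset ℕ))
    (V : Finset ℕ), U3 F → (∀ e ∈ F, e ⊆ V) → V.card = m + t → ¬ Mt F (t + 1) →
    (m + t).choose 3 + bb m ≤ F.card + m.choose 3 →
    ∃ T ⊆ V, T.card = t ∧ ∃ P ⊆ V \ T, P.card = m / 2 ∧ F = md V T P := by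
  induction t with
  | zero =>
    intro _ F V h3 hV hVc hno hF
    have hFF : FF F := by
      by_contra hc
      obtain ⟨S, hS⟩ := exists_IsF h3 hc
      exact hno ⟨fun _ => S, fun _ => hS, fun i j hij => absurd (Fin.ext (by omega)) hij⟩
    simp only [add_zero] at hVc hF
    obtain ⟨P, hP, hc, rfl⟩ := exact_thm h3 hFF hV
      (by rw [hVc]; exact le_trans (by norm_num) hm) (by rw [hVc]; omega)
    refine ⟨∅, by simp, by simp, P, by simpa using hP, by rw [hc, hVc], ?_⟩
    simp [cross, md]
  | succ t ih =>
    intro hmt F V h3 hV hVc hno hF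
    obtain ⟨v, hv, hvm⟩ := key h3 hV hm (by omega) hmt hVc hno hF
    have hVe : (V.erase v).card = m + t := by rw [card_erase_of_mem hv, hVc]; omega
    have hsplit := card_filter_add_card_filter_not (s := F) (fun e => v ∈ e)
    have hdl := deg_le h3 hV hv
    rw [hVc, show m + (t + 1) - 1 = m + t by omega] at hdl
    rw [← add_assoc, choose3_succ] at hF
    have hVsub : ∀ e ∈ F.filter (fun e => v ∉ e), e ⊆ V.erase v := by
      intro e he
      rw [mem_filter] at he
      exact subset_erase.2 ⟨hV e he.1, he.2⟩
    obtain ⟨T, hT, hTc, P, hP, hPc, hFe⟩ := ih (by omega) (F.filter fun e => v ∉ e) (V.erase v)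
      (h3.mono (filter_subset _ _)) hVsub hVe hvm (by omega)
    have hvT : v ∉ T := fun h => (mem_erase.1 (hT h)).1 rfl
    have hcard : ((V.erase v) \ T).card = m := by
      rw [card_sdiff_of_subset hT, hVe, hTc]; omega
    have hmd := card_md hT hP (by rw [hcard, hPc])
    rw [hcard, hVe, ← hFe] at hmd
    have hD : (F.filter fun e => v ∈ e) = (powersetCard 3 V).filter fun e => v ∈ e := by
      apply eq_of_subset_of_card_le
      · intro e he
        rw [mem_filter] at he ⊢
        exact ⟨mem_powersetCard.2 ⟨hV e he.1, h3 e he.1⟩, he.2⟩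
      · rw [card_thru hv, hVc, show m + (t + 1) - 1 = m + t by omega]
        omega
    have hVT : V \ insert v T = (V.erase v) \ T := by
      ext a
      simp only [Finset.mem_sdiff, mem_insert, mem_erase]
      tauto
    refine ⟨insert v T, insert_subset hv (hT.trans (erase_subset _ _)), by
      rw [card_insert_of_notMem hvT, hTc], P, by rw [hVT]; exact hP, hPc, ?_⟩
    have hF2 : F = (F.filter fun e => v ∈ e) ∪ F.filter fun e => v ∉ e :=
      (filter_union_filter_not_eq _ _).symm
    rw [hF2, hD, hFe]
    ext e
    simp only [md, hVT, mem_union, mem_filter, mem_powersetCard, subset_erase]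
    have b1 : v ∈ e → ¬ e ⊆ P := fun h h' =>
      (mem_erase.1 (Finset.mem_sdiff.1 (hP (h' h))).1).1 rfl
    have b2 : v ∈ e → ¬ e ⊆ (V.erase v \ T) \ P := fun h h' =>
      (mem_erase.1 (Finset.mem_sdiff.1 (Finset.mem_sdiff.1 (h' h)).1).1).1 rfl
    tauto


lemma mem_ofEdges {r : ℕ} {V : Finset ℕ} {E : Finset (Finset ℕ)} {e : Finset ℕ} :
    e ∈ (HGraph.ofEdges r V E).edges ↔ e ∈ E ∧ e ⊆ V ∧ e.card = r := by
  unfold HGraph.ofEdges; exact mem_filter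

lemma image_triple (f : ℕ → ℕ) (a b c : ℕ) :
    ({a, b, c} : Finset ℕ).image f = {f a, f b, f c} := by
  simp [image_insert]

lemma fano_verts : fano.verts = Icc 1 7 := rfl

lemma fano_edge {a b c : ℕ} (h : ({a, b, c} : Finset ℕ) ∈
    ({{1, 2, 3}, {3, 4, 5}, {5, 6, 1}, {1, 7, 4}, {2, 7, 5}, {3, 7, 6}, {2, 4, 6}} :
      Finset (Finset ℕ))) (h1 : ({a, b, c} : Finset ℕ) ⊆ Icc 1 7)
      (h2 : ({a, b, c} : Finset ℕ).card = 3) : ({a, b, c} : Finset ℕ) ∈ fano.edges :=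
  mem_ofEdges.2 ⟨h, h1, h2⟩

lemma Mt_of_matching {H : HGraph 3} {k : ℕ} (h : fano.HasMatching H k) : Mt H.edges k := by
  obtain ⟨S, h1, h2, h3⟩ := h
  refine ⟨S, fun i => ?_, h2⟩
  obtain ⟨f, hf1, hf2, hf3⟩ := h3 i
  have hc : (S i).card = 7 := (h1 i).2
  have hsub : fano.verts.image f ⊆ S i := by
    intro a ha
    obtain ⟨v, hv, rfl⟩ := mem_image.1 ha
    exact (mem_inter.1 (hf2 v hv)).2
  have heq : fano.verts.image f = S i := by
    apply eq_of_subset_of_card_le hsub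
    rw [card_image_of_injOn hf1, hc]; rfl
  have hrel : ∀ a b c, ({a, b, c} : Finset ℕ) ∈ fano.edges → rel H.edges (f a) (f b) (f c) := by
    intro a b c he
    have := hf3 _ he
    rw [image_triple] at this
    exact (mem_filter.1 (mem_ofEdges.1 this).1).1
  refine ⟨hc, f 1, f 2, f 3, f 5, f 6, f 7, f 4, ?_, ?_, ?_, ?_, ?_, ?_, ?_, ?_⟩
  · rw [← heq, fano_verts, show Icc 1 7 = ({1, 2, 3, 5, 6, 7, 4} : Finset ℕ) by decide]
    simp [image_insert]
  · exact hrel _ _ _ (fano_edge (by decide) (by decide) (by decide))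
  · exact hrel _ _ _ (fano_edge (by decide) (by decide) (by decide))
  · exact hrel _ _ _ (fano_edge (by decide) (by decide) (by decide))
  · exact hrel _ _ _ (fano_edge (by decide) (by decide) (by decide))
  · exact hrel _ _ _ (fano_edge (by decide) (by decide) (by decide))
  · exact hrel _ _ _ (fano_edge (by decide) (by decide) (by decide))
  · exact hrel _ _ _ (fano_edge (by decide) (by decide) (by decide))

lemma matching_of_Mt {H : HGraph 3} {k : ℕ} (h : Mt H.edges k) : fano.HasMatching H k := by
  obtain ⟨S, h1, h2⟩ := h
  have hsub : ∀ i, S i ⊆ H.verts := fun i =>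
    (h1 i).prop (Q := fun x => x ∈ H.verts) (fun e he x hx => H.edges_sub e he hx)
  refine ⟨S, fun i => ⟨hsub i, (h1 i).1⟩, h2, fun i => ?_⟩
  have hs := hsub i
  obtain ⟨hc, p, q, r, x, y, z, w, hS, e1, e2, e3, e4, e5, e6, e7⟩ := h1 i
  set f : ℕ → ℕ := fun n => if n = 1 then p else if n = 2 then q else if n = 3 then r else
    if n = 5 then x else if n = 6 then y else if n = 7 then z else w with hf
  have f1 : f 1 = p := by simp [hf]
  have f2 : f 2 = q := by simp [hf]
  have f3 : f 3 = r := by simp [hf]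
  have f4 : f 4 = w := by simp [hf]
  have f5 : f 5 = x := by simp [hf]
  have f6 : f 6 = y := by simp [hf]
  have f7 : f 7 = z := by simp [hf]
  have him : fano.verts.image f = S i := by
    rw [hS, fano_verts, show Icc 1 7 = ({1, 2, 3, 5, 6, 7, 4} : Finset ℕ) by decide]
    simp [image_insert, f1, f2, f3, f4, f5, f6, f7]
  refine ⟨f, ?_, ?_, ?_⟩
  · apply injOn_of_card_image_eq
    rw [him, hc]; rfl
  · intro v hv
    have : f v ∈ S i := by rw [← him]; exact mem_image_of_mem _ hv
    exact mem_inter.2 ⟨hs this, this⟩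
  · intro e he
    have hes : e ⊆ fano.verts := fano.edges_sub e he
    have hi : e.image f ⊆ S i := by rw [← him]; exact image_subset_image hes
    have hE : e.image f ∈ H.edges := by
      have := (mem_ofEdges.1 he).1
      simp only [mem_insert, mem_singleton] at this
      rcases this with rfl | rfl | rfl | rfl | rfl | rfl | rfl <;>
        simp only [image_triple, f1, f2, f3, f4, f5, f6, f7]
      · exact e1
      · exact rel_s23 e6
      · exact rel_s23 (rel_s12 e2)
      · exact e3
      · exact rel_s23 e4
      · exact rel_s23 e7
      · exact rel_s23 e5
    exact mem_ofEdges.2 ⟨mem_filter.2 ⟨hE, hi⟩, subset_inter (hi.trans hs) hi, H.edges_card _ hE⟩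

lemma matching_iff {H : HGraph 3} {k : ℕ} : fano.HasMatching H k ↔ Mt H.edges k :=
  ⟨Mt_of_matching, matching_of_Mt⟩

lemma md_meets {V T P S : Finset ℕ} (hS : IsF (md V T P) S) : ∃ a ∈ S, a ∈ T := by
  by_contra! hno
  obtain ⟨hc, p, q, r, x, y, z, w, hSe, e1, e2, e3, e4, e5, e6, e7⟩ := hS
  have key : ∀ a b c, a ∈ S → b ∈ S → c ∈ S → rel (md V T P) a b c →
      ¬ (a ∈ P ∧ b ∈ P ∧ c ∈ P) ∧ ¬ (a ∉ P ∧ b ∉ P ∧ c ∉ P) := by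
    intro a b c ha hb hc h
    have h' := mem_filter.1 h
    have hV := (mem_powersetCard.1 h'.1).1
    have ha' : a ∈ V := hV (by simp)
    have hb' : b ∈ V := hV (by simp)
    have hc' : c ∈ V := hV (by simp)
    constructor
    · rintro ⟨h1, h2, h3⟩
      apply h'.2.1
      intro d hd
      simp only [mem_insert, mem_singleton] at hd
      rcases hd with rfl | rfl | rfl <;> assumption
    · rintro ⟨h1, h2, h3⟩
      apply h'.2.2
      intro d hd
      simp only [mem_insert, mem_singleton] at hd
      have hdS : d ∈ S ∧ d ∈ V ∧ d ∉ P := by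
        rcases hd with rfl | rfl | rfl <;> exact ⟨by assumption, by assumption, by assumption⟩
      exact Finset.mem_sdiff.2 ⟨Finset.mem_sdiff.2 ⟨hdS.2.1, hno d hdS.1⟩, hdS.2.2⟩
  have m1 : p ∈ S := by rw [hSe]; simp
  have m2 : q ∈ S := by rw [hSe]; simp
  have m3 : r ∈ S := by rw [hSe]; simp
  have m4 : x ∈ S := by rw [hSe]; simp
  have m5 : y ∈ S := by rw [hSe]; simp
  have m6 : z ∈ S := by rw [hSe]; simp
  have m7 : w ∈ S := by rw [hSe]; simp
  have k1 := key _ _ _ m1 m2 m3 e1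
  have k2 := key _ _ _ m1 m4 m5 e2
  have k3 := key _ _ _ m1 m6 m7 e3
  have k4 := key _ _ _ m2 m4 m6 e4
  have k5 := key _ _ _ m2 m5 m7 e5
  have k6 := key _ _ _ m3 m4 m7 e6
  have k7 := key _ _ _ m3 m5 m6 e7
  clear key e1 e2 e3 e4 e5 e6 e7 m1 m2 m3 m4 m5 m6 m7 hSe hno hc
  grind

lemma md_noMt {V T P : Finset ℕ} : ¬ Mt (md V T P) (T.card + 1) := by
  rintro ⟨S, h1, h2⟩
  choose g hg hgT using fun i => md_meets (h1 i)
  have hinj : Function.Injective g := by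
    intro i j hij
    by_contra hne
    exact disjoint_left.1 (h2 i j hne) (hg i) (hij ▸ hg j)
  have := card_le_card_of_injOn (s := univ) (t := T) g (fun i _ => hgT i) hinj.injOn
  simp at this

lemma md_iff {V T P V' T' P' : Finset ℕ} {f : ℕ → ℕ} (hf : Set.BijOn f V V')
    (hP : P ⊆ V) (hP' : P' ⊆ V') (h1 : ∀ x ∈ V, (x ∈ T ↔ f x ∈ T'))
    (h2 : ∀ x ∈ V, (x ∈ P ↔ f x ∈ P')) {e : Finset ℕ} (he : e ∈ powersetCard 3 V) :
    e ∈ md V T P ↔ e.image f ∈ md V' T' P' := by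
  have he' := mem_powersetCard.1 he
  have hs : e.image f ∈ powersetCard 3 V' := by
    rw [mem_powersetCard, card_image_of_injOn (hf.injOn.mono (by exact_mod_cast he'.1))]
    refine ⟨?_, he'.2⟩
    intro a ha
    obtain ⟨b, hb, rfl⟩ := mem_image.1 ha
    exact_mod_cast hf.mapsTo (by exact_mod_cast he'.1 hb)
  have a1 : e ⊆ P ↔ e.image f ⊆ P' := by
    rw [image_subset_iff]
    exact forall₂_congr fun x hx => h2 x (he'.1 hx)
  have a2 : e ⊆ (V \ T) \ P ↔ e.image f ⊆ (V' \ T') \ P' := by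
    rw [image_subset_iff]
    refine forall₂_congr fun x hx => ?_
    have hx' := he'.1 hx
    have hfx : f x ∈ V' := by exact_mod_cast hf.mapsTo (by exact_mod_cast hx')
    simp only [Finset.mem_sdiff, ← h1 x hx', ← h2 x hx', hx', hfx]
  simp only [md, mem_filter, he, hs, a1, a2]

lemma glue {s₁ s₂ t₁ t₂ : Finset ℕ} (hs : Disjoint s₁ s₂) (ht : Disjoint t₁ t₂) {f₁ f₂ : ℕ → ℕ}
    (h1 : Set.BijOn f₁ s₁ t₁) (h2 : Set.BijOn f₂ s₂ t₂) :
    Set.BijOn (fun x => if x ∈ s₁ then f₁ x else f₂ x) ((s₁ ∪ s₂ : Finset ℕ) : Set ℕ)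
      ((t₁ ∪ t₂ : Finset ℕ) : Set ℕ) := by
  have e1 : Set.EqOn f₁ (fun x => if x ∈ s₁ then f₁ x else f₂ x) s₁ := by
    intro x hx
    have : x ∈ s₁ := by exact_mod_cast hx
    simp [this]
  have e2 : Set.EqOn f₂ (fun x => if x ∈ s₁ then f₁ x else f₂ x) s₂ := by
    intro x hx
    have : x ∉ s₁ := disjoint_right.1 hs (by exact_mod_cast hx)
    simp [this]
  have b1 := h1.congr e1
  have b2 := h2.congr e2
  rw [coe_union, coe_union]
  refine b1.union b2 ?_
  rw [Set.injOn_union (by exact_mod_cast hs)]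
  refine ⟨b1.injOn, b2.injOn, fun a ha b hb hab => ?_⟩
  have c1 := b1.mapsTo ha
  have c2 := b2.mapsTo hb
  rw [hab] at c1
  exact disjoint_left.1 ht (by exact_mod_cast c1) (by exact_mod_cast c2)

lemma exists_bij {s t : Finset ℕ} (h : s.card = t.card) : ∃ f : ℕ → ℕ, Set.BijOn f s t :=
  Set.Finite.exists_bijOn_of_encard_eq s.finite_toSet (by
    rw [Set.encard_coe_eq_coe_finsetCard, Set.encard_coe_eq_coe_finsetCard, h])

lemma exists_map {V T P V' T' P' : Finset ℕ} (hT : T ⊆ V) (hP : P ⊆ V \ T) (hT' : T' ⊆ V')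
    (hP' : P' ⊆ V' \ T') (hVc : V.card = V'.card) (hTc : T.card = T'.card)
    (hPc : P.card = P'.card) : ∃ f : ℕ → ℕ, Set.BijOn f V V' ∧
    (∀ x ∈ V, (x ∈ T ↔ f x ∈ T')) ∧ (∀ x ∈ V, (x ∈ P ↔ f x ∈ P')) := by
  obtain ⟨f1, h1⟩ := exists_bij hTc
  obtain ⟨f2, h2⟩ := exists_bij hPc
  obtain ⟨f3, h3⟩ : ∃ f : ℕ → ℕ, Set.BijOn f (((V \ T) \ P : Finset ℕ) : Set ℕ)
      (((V' \ T') \ P' : Finset ℕ) : Set ℕ) := exists_bij (by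
    rw [card_sdiff_of_subset hP, card_sdiff_of_subset hP', card_sdiff_of_subset hT,
      card_sdiff_of_subset hT', hVc, hTc, hPc])
  have g1 := glue disjoint_sdiff disjoint_sdiff h2 h3
  rw [union_sdiff_of_subset hP, union_sdiff_of_subset hP'] at g1
  have g2 := glue disjoint_sdiff disjoint_sdiff h1 g1
  rw [union_sdiff_of_subset hT, union_sdiff_of_subset hT'] at g2
  refine ⟨_, g2, fun x hx => ?_, fun x hx => ?_⟩
  all_goals
    by_cases hxT : x ∈ T
    · have m1 : f1 x ∈ T' := h1.mapsTo hxT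
      have m2 : x ∉ P := fun h => (Finset.mem_sdiff.1 (hP h)).2 hxT
      have m3 : f1 x ∉ P' := fun h => (Finset.mem_sdiff.1 (hP' h)).2 m1
      simp [hxT, m1, m2, m3]
    · by_cases hxP : x ∈ P
      · have m1 : f2 x ∈ P' := h2.mapsTo hxP
        have m2 := (Finset.mem_sdiff.1 (hP' m1)).2
        simp [hxT, hxP, m1, m2]
      · have m1 : f3 x ∈ (V' \ T') \ P' := h3.mapsTo
          (Finset.mem_coe.2 (Finset.mem_sdiff.2 ⟨Finset.mem_sdiff.2 ⟨hx, hxT⟩, hxP⟩))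
        have m2 := (Finset.mem_sdiff.1 m1).2
        have m3 := (Finset.mem_sdiff.1 (Finset.mem_sdiff.1 m1).1).2
        simp [hxT, hxP, m3, m2]

lemma card_pre {V V' S : Finset ℕ} {f : ℕ → ℕ} (hf : Set.BijOn f V V') (hS : S ⊆ V') :
    (V.filter fun x => f x ∈ S).card = S.card := by
  rw [← card_image_of_injOn (f := f) (hf.injOn.mono (by
    intro x hx; exact_mod_cast (mem_filter.1 (by exact_mod_cast hx)).1))]
  congr 1
  ext a
  simp only [mem_image, mem_filter]
  constructor
  · rintro ⟨b, ⟨-, hb⟩, rfl⟩; exact hb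
  · intro ha
    obtain ⟨b, hb, rfl⟩ := hf.surjOn (by exact_mod_cast hS ha)
    exact ⟨b, ⟨by exact_mod_cast hb, ha⟩, rfl⟩

/-- being a model -/
def IsM (m t : ℕ) (H : HGraph 3) : Prop :=
  H.verts.card = m + t ∧ ∃ T ⊆ H.verts, T.card = t ∧ ∃ P ⊆ H.verts \ T, P.card = m / 2 ∧
    H.edges = md H.verts T P

lemma iso_iff {m t : ℕ} {H J : HGraph 3} (hJ : IsM m t J) : H.Iso J ↔ IsM m t H := by
  obtain ⟨hJc, T', hT', hTc', P', hP', hPc', hJe⟩ := hJ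
  have hP2' : P' ⊆ J.verts := hP'.trans sdiff_subset
  constructor
  · rintro ⟨f, hf, hfe⟩
    have hc : H.verts.card = J.verts.card := by
      have := card_pre hf (Subset.refl J.verts)
      rwa [filter_true_of_mem (fun x hx => Finset.mem_coe.1 (hf.mapsTo (Finset.mem_coe.2 hx)))] at this
    refine ⟨hc.trans hJc, H.verts.filter fun x => f x ∈ T', filter_subset _ _,
      (card_pre hf hT').trans hTc', H.verts.filter fun x => f x ∈ P', ?_,
      (card_pre hf hP2').trans hPc', ?_⟩
    · intro x hx
      rw [mem_filter] at hx
      refine Finset.mem_sdiff.2 ⟨hx.1, fun h => ?_⟩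
      exact (Finset.mem_sdiff.1 (hP' hx.2)).2 (mem_filter.1 h).2
    · ext e
      by_cases he : e ∈ powersetCard 3 H.verts
      · rw [hfe e he, hJe]
        refine (md_iff hf (filter_subset _ _) hP2' ?_ ?_ he).symm
        · intro x hx; simp [hx]
        · intro x hx; simp [hx]
      · constructor
        · intro h
          exact absurd (mem_powersetCard.2 ⟨H.edges_sub e h, H.edges_card e h⟩) he
        · intro h
          exact absurd (mem_filter.1 h).1 he
  · rintro ⟨hHc, T, hT, hTc, P, hP, hPc, hHe⟩
    obtain ⟨f, hf, h1, h2⟩ := exists_map hT hP hT' hP' (hHc.trans hJc.symm) (hTc.trans hTc'.symm)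
      (hPc.trans hPc'.symm)
    refine ⟨f, hf, fun e he => ?_⟩
    rw [hHe, hJe]
    exact md_iff hf (hP.trans sdiff_subset) hP2' h1 h2 he

lemma target_IsM (m t : ℕ) : IsM m t ((completeOn 3 (Finset.range t)).join
    (crossOn 3 (Finset.Ico t (t + m / 2)) (Finset.Ico (t + m / 2) (m + t)))) := by
  have hv : ((completeOn 3 (Finset.range t)).join
    (crossOn 3 (Finset.Ico t (t + m / 2)) (Finset.Ico (t + m / 2) (m + t)))).verts =
      range (m + t) := by
    change range t ∪ (Ico t (t + m / 2) ∪ Ico (t + m / 2) (m + t)) = _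
    ext a
    simp only [mem_union, mem_range, mem_Ico]
    omega
  refine ⟨by rw [hv, card_range], range t, ?_, card_range t, Ico t (t + m / 2), ?_, ?_, ?_⟩
  · rw [hv]; exact range_subset_range.2 (by omega)
  · rw [hv]
    intro a
    simp only [Finset.mem_sdiff, mem_range, mem_Ico]
    omega
  · simp
  · rw [hv]
    ext e
    have hU : Ico t (t + m / 2) ∪ Ico (t + m / 2) (m + t) = Ico t (m + t) := by
      ext a
      simp only [mem_union, mem_Ico]
      omega
    have hR : (range (m + t) \ range t) \ Ico t (t + m / 2) = Ico (t + m / 2) (m + t) := by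
      ext a
      simp only [Finset.mem_sdiff, mem_range, mem_Ico]
      omega
    have hW : range t ∪ Ico t (m + t) = range (m + t) := by
      ext a
      simp only [mem_union, mem_range, mem_Ico]
      omega
    unfold HGraph.join
    rw [mem_ofEdges]
    change (e ∈ (completeOn 3 (range t)).edges ∪ (crossOn 3 (Ico t (t + m / 2)) (Ico (t + m / 2) (m + t))).edges ∪
      (powersetCard 3 (range t ∪ (Ico t (t + m / 2) ∪ Ico (t + m / 2) (m + t)))).filter
        (fun e => (e ∩ range t).Nonempty ∧ (e ∩ (Ico t (t + m / 2) ∪ Ico (t + m / 2) (m + t))).Nonempty) ∧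
      e ⊆ range t ∪ (Ico t (t + m / 2) ∪ Ico (t + m / 2) (m + t)) ∧ e.card = 3) ↔ _
    unfold completeOn crossOn
    rw [mem_union, mem_union, mem_ofEdges, mem_ofEdges, hU, hW]
    unfold md
    rw [hR]
    simp only [mem_filter, mem_powersetCard]
    by_cases he : e ⊆ range (m + t) ∧ e.card = 3
    swap
    · tauto
    have hne : ∀ A : Finset ℕ, (e ∩ A).Nonempty ↔ ∃ a ∈ e, a ∈ A := by
      intro A
      simp [Finset.Nonempty, mem_inter]
    obtain ⟨x, hx⟩ : e.Nonempty := card_pos.1 (by omega)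
    have hee : ∀ a ∈ e, a < m + t := fun a ha => mem_range.1 (he.1 ha)
    simp only [hne, he, subset_iff, mem_range, mem_Ico]
    simp only [true_and, and_true]
    constructor
    · intro h
      constructor
      · intro hh
        rcases h with (h | ⟨⟨-, ⟨a, ha, ha'⟩, b, hb, hb'⟩, -⟩) | ⟨⟨a, ha, ha'⟩, b, hb, hb'⟩
        · have := h.1 hx; have := hh hx; omega
        · have := hh hb; omega
        · have := hh ha; omega
      · intro hh
        rcases h with (h | ⟨⟨-, ⟨a, ha, ha'⟩, b, hb, hb'⟩, -⟩) | ⟨⟨a, ha, ha'⟩, b, hb, hb'⟩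
        · have := h.1 hx; have := hh hx; omega
        · have := hh ha; omega
        · have := hh ha; omega
    · rintro ⟨h1, h2⟩
      by_cases h3 : ∃ c ∈ e, c < t
      · by_cases h4 : ∀ c ∈ e, c < t
        · left; left; exact ⟨fun c hc => h4 c hc, fun c hc => h4 c hc⟩
        · push Not at h4
          obtain ⟨d, hd, hd'⟩ := h4
          right; exact ⟨h3, d, hd, hd', hee d hd⟩
      · push Not at h3
        left; right
        have h5 : ∃ a ∈ e, ¬ (t ≤ a ∧ a < t + m / 2) := by
          by_contra hc; push Not at hc
          exact h1 fun a ha => hc a ha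
        have h6 : ∃ a ∈ e, ¬ (t + m / 2 ≤ a ∧ a < m + t) := by
          by_contra hc; push Not at hc
          exact h2 fun a ha => hc a ha
        obtain ⟨a, ha, ha'⟩ := h5
        obtain ⟨b, hb, hb'⟩ := h6
        have a1 := hee a ha
        have a2 := hee b hb
        have a3 := h3 a ha
        have a4 := h3 b hb
        exact ⟨⟨fun c hc => ⟨h3 c hc, hee c hc⟩, ⟨b, hb, by omega⟩, a, ha, by omega⟩,
          fun c hc => ⟨h3 c hc, hee c hc⟩⟩

lemma IsM.props {m t : ℕ} {H : HGraph 3} (h : IsM m t H) : ¬ fano.HasMatching H (t + 1) ∧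
    H.edges.card + m.choose 3 = (m + t).choose 3 + bb m := by
  obtain ⟨hHc, T, hT, hTc, P, hP, hPc, hHe⟩ := h
  have hc : (H.verts \ T).card = m := by rw [card_sdiff_of_subset hT, hHc, hTc]; omega
  constructor
  · rw [matching_iff, hHe, ← hTc]; exact md_noMt
  · have := card_md hT hP (by rw [hc, hPc])
    rw [hHe]
    rwa [hc, hHc] at this

lemma IsM_of {m t : ℕ} (hm : 10 ^ 60 ≤ m) (hmt : 10 ^ 20 * t ≤ m) {H : HGraph 3}
    (hc : H.verts.card = m + t) (hno : ¬ fano.HasMatching H (t + 1))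
    (he : (m + t).choose 3 + bb m ≤ H.edges.card + m.choose 3) : IsM m t H :=
  ⟨hc, main hm t hmt H.edges H.verts H.edges_card H.edges_sub hc (by rwa [← matching_iff]) he⟩

lemma ex_eq {m t : ℕ} (hm : 10 ^ 60 ≤ m) (hmt : 10 ^ 20 * t ≤ m) :
    exMatchN 3 (m + t) t fano + m.choose 3 = (m + t).choose 3 + bb m := by
  have hJ := target_IsM m t
  have hp := hJ.props
  rw [← hp.2]
  congr 1
  apply IsGreatest.csSup_eq
  refine ⟨⟨_, hJ.1, hp.1, rfl⟩, ?_⟩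
  rintro k ⟨H, h1, h2, rfl⟩
  by_contra hc
  have := (IsM_of hm hmt h1 h2 (by omega)).props.2
  omega

lemma extremal_iff {m t : ℕ} (hm : 10 ^ 60 ≤ m) (hmt : 10 ^ 20 * t ≤ m) (H : HGraph 3) :
    IsExtremalMatchingFree 3 (m + t) t fano H ↔ IsM m t H := by
  have hex := ex_eq hm hmt
  constructor
  · rintro ⟨h1, h2, h3⟩
    exact IsM_of hm hmt h1 h2 (by omega)
  · intro h
    have := h.props
    exact ⟨h.1, this.1, by omega⟩

end FC

/-- the density Corrádi–Hajnal theorem for the Fano plane. -/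
theorem statement_6 :
    ∃ N₀ : ℕ, ∃ c : ℝ, 0 < c ∧ ∀ n : ℕ, N₀ ≤ n → ∀ t : ℕ, (t : ℝ) ≤ c * n →
      ∀ H : HGraph 3, IsExtremalMatchingFree 3 n t fano H ↔
        H.Iso ((completeOn 3 (Finset.range t)).join
          (crossOn 3 (Finset.Ico t (t + (n - t) / 2)) (Finset.Ico (t + (n - t) / 2) n))) := by
  refine ⟨2 * 10 ^ 60, 1 / 10 ^ 21, by positivity, fun n hn t ht H => ?_⟩
  have h1 : 10 ^ 21 * t ≤ n := by
    have : (10 : ℝ) ^ 21 * t ≤ n := by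
      rw [div_mul_eq_mul_div, one_mul, le_div_iff₀ (by positivity)] at ht
      linarith
    exact_mod_cast this
  obtain ⟨m, rfl⟩ : ∃ m, n = m + t := ⟨n - t, by omega⟩
  rw [Nat.add_sub_cancel, FC.extremal_iff (by omega) (by omega), FC.iso_iff (FC.target_IsM m t)]

end DensityCH
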